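/- arXiv:0805.4353 — 8 statements merged into one kernel-verified Lean document; each statement's English description precedes it below -/
import Mathlib

section
/- Let μ and ν be probability measures on ℝ with μ((0,∞)) = 1 and ν([0,∞)) = 1, and write F̄(x) := μ((x,∞)) and Ḡ(x) := ν((x,∞)). Assume that μ is subexponential and that there exists a constant c > 0 such that Ḡ(x)/F̄(x) → c as x → ∞. Then (μ∗ν)((x,∞)) / (F̄(x) + Ḡ(x)) → 1 as x → ∞, where μ∗ν is the convolution of μ and ν. -/
open MeasureTheory Filter Set

/-- A probability measure `μ` on `ℝ` (concentrated on `(0,∞)`) is subexponential if its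
tail is positive and the tail of `μ ∗ μ` is asymptotic to twice the tail of `μ`. -/
def Subexponential (μ : Measure ℝ) : Prop :=
  (∀ x > (0 : ℝ), 0 < μ (Ioi x)) ∧
    Tendsto (fun x : ℝ => ((μ.conv μ) (Ioi x)).toReal / (μ (Ioi x)).toReal)
      atTop (nhds 2)

/-!
Let `X ∼ μ` and `Y ∼ ν` be independent and let `F`, `G` be their tails. It suffices to show
`P(X + Y > x) / F x → 1 + c`. For a fixed level `K` and `x ≥ 0`, the event `X + Y > x` contains
the disjoint events `{X > x + K, -K < Y ≤ K}`, `{Y > x + K, -K < X ≤ K}` and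
`J = {X > K, Y > K, X + Y > x}`, and it is contained in the union of `{X > x - K}`, `{Y > x - K}`
and `J`. If `F` is insensitive to bounded shifts, then, up to `P(J)`, both bounds divided by `F x`
tend to `1 + c` as first `x → ∞` and then `K → ∞`.

To see that `J` is negligible, compare `Y` with an independent copy `X'` of `X`: since `G = O(F)`,
Fubini bounds `P(J)` by a constant times the probability of the same event for `(X, X')`. For that
pair the inclusions above give the bound `P(X + X' > x) - 2 F (x + K) P(-K < X ≤ K)`, which divided
by `F x` tends to `2 - 2 P(-K < X ≤ K)` as `x → ∞`, and then to `0` as `K → ∞`.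

That `F` is insensitive to shifts when `X ≥ 0` follows from
`P(X + X' > x) ≥ F x + P(X ≤ t) F x + P(t < X ≤ x) F (x - t)`: the left side is asymptotic to
`2 F x`, which forces `F (x - t) / F x → 1`.
-/

open Asymptotics
open scoped Topology

/-- A measure on `ℝ` is long-tailed if its tail is asymptotically invariant under every shift.
As `0 / 0 = 0`, the limit `1` forces the tail to be positive everywhere. -/
def IsLongTailed (μ : Measure ℝ) : Prop :=
  ∀ t : ℝ, Tendsto (fun x => μ.real (Ioi (x + t)) / μ.real (Ioi x)) atTop (𝓝 1)

/-- The event that two summands both exceed `K` and their sum exceeds `x`; it is the part of the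
tail event of a convolution that no single large summand accounts for. -/
def jointTail (K x : ℝ) : Set (ℝ × ℝ) := {p | K < p.1 ∧ K < p.2 ∧ x < p.1 + p.2}

lemma measurableSet_jointTail (K x : ℝ) : MeasurableSet (jointTail K x) :=
  (measurableSet_lt measurable_const measurable_fst).inter
    ((measurableSet_lt measurable_const measurable_snd).inter
      (measurableSet_lt measurable_const (measurable_fst.add measurable_snd)))

lemma preimage_prodMk_jointTail {K a : ℝ} (ha : K < a) (x : ℝ) :
    Prod.mk a ⁻¹' jointTail K x = Ioi (max K (x - a)) := by
  ext b
  simp only [jointTail, mem_preimage, mem_ofPred_eq, mem_Ioi, max_lt_iff, sub_lt_iff_lt_add', ha,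
    true_and]

lemma preimage_prodMk_jointTail_of_le {K a : ℝ} (ha : a ≤ K) (x : ℝ) :
    Prod.mk a ⁻¹' jointTail K x = ∅ :=
  eq_empty_of_forall_notMem fun _ hb => ha.not_gt hb.1

lemma conv_real_Ioi (μ ν : Measure ℝ) (x : ℝ) :
    (μ ∗ ν).real (Ioi x) = (μ.prod ν).real {p : ℝ × ℝ | x < p.1 + p.2} :=
  map_measureReal_apply (by fun_prop) measurableSet_Ioi

section FiniteMeasure

variable (μ ν ρ : Measure ℝ) [IsFiniteMeasure μ] [IsFiniteMeasure ν] [IsFiniteMeasure ρ]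

lemma tendsto_real_Ioc_neg_atTop :
    Tendsto (fun K => μ.real (Ioc (-K) K)) atTop (𝓝 (μ.real univ)) := by
  have hunion : ⋃ K : ℝ, Ioc (-K) K = univ :=
    iUnion_eq_univ_iff.2 fun a => ⟨|a| + 1, by linarith [neg_abs_le a], by linarith [le_abs_self a]⟩
  have hmono : Monotone fun K : ℝ => Ioc (-K) K := fun _ _ h => Ioc_subset_Ioc (neg_le_neg h) h
  rw [← hunion]
  exact (ENNReal.tendsto_toReal (measure_ne_top _ _)).comp (tendsto_measure_iUnion_atTop hmono)

lemma tendsto_real_Ioc_atTop (a : ℝ) :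
    Tendsto (fun x => μ.real (Ioc a x)) atTop (𝓝 (μ.real (Ioi a))) := by
  have hmono : Monotone fun x : ℝ => Ioc a x := fun _ _ h => Ioc_subset_Ioc_right h
  rw [← iUnion_Ioc_right]
  exact (ENNReal.tendsto_toReal (measure_ne_top _ _)).comp (tendsto_measure_iUnion_atTop hmono)

lemma conv_real_Ioi_le (K x : ℝ) :
    (μ ∗ ν).real (Ioi x) ≤
      μ.real (Ioi (x - K)) * ν.real univ + μ.real univ * ν.real (Ioi (x - K)) +
        (μ.prod ν).real (jointTail K x) := by
  have hcover : {p : ℝ × ℝ | x < p.1 + p.2} ⊆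
      (Ioi (x - K) ×ˢ univ ∪ univ ×ˢ Ioi (x - K)) ∪ jointTail K x := by
    rintro ⟨a, b⟩ (hab : x < a + b)
    by_cases ha : x - K < a
    · exact Or.inl (Or.inl ⟨ha, mem_univ b⟩)
    by_cases hb : x - K < b
    · exact Or.inl (Or.inr ⟨mem_univ a, hb⟩)
    exact Or.inr ⟨by linarith, by linarith, hab⟩
  rw [conv_real_Ioi, ← measureReal_prod_prod, ← measureReal_prod_prod]
  exact (measureReal_mono hcover).trans
    ((measureReal_union_le _ _).trans (by gcongr; exact measureReal_union_le _ _))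

lemma add_jointTail_le_conv_real_Ioi (K : ℝ) {x : ℝ} (hx : 0 ≤ x) :
    μ.real (Ioi (x + K)) * ν.real (Ioc (-K) K) + μ.real (Ioc (-K) K) * ν.real (Ioi (x + K)) +
        (μ.prod ν).real (jointTail K x) ≤ (μ ∗ ν).real (Ioi x) := by
  have hdisj : Disjoint (Ioi (x + K) ×ˢ Ioc (-K) K) (Ioc (-K) K ×ˢ Ioi (x + K)) :=
    disjoint_left.2 fun p hp hp' => by linarith [hp.1.out, hp'.1.2]
  have hdisj_joint : Disjoint (Ioi (x + K) ×ˢ Ioc (-K) K ∪ Ioc (-K) K ×ˢ Ioi (x + K))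
      (jointTail K x) :=
    disjoint_union_left.2 ⟨disjoint_left.2 fun p hp hp' => hp.2.2.not_gt hp'.2.1,
      disjoint_left.2 fun p hp hp' => hp.1.2.not_gt hp'.1⟩
  have hsub : (Ioi (x + K) ×ˢ Ioc (-K) K ∪ Ioc (-K) K ×ˢ Ioi (x + K)) ∪ jointTail K x ⊆
      {p : ℝ × ℝ | x < p.1 + p.2} := by
    rintro ⟨a, b⟩ ((⟨ha, hb⟩ | ⟨ha, hb⟩) | hab)
    · exact show x < a + b by linarith [ha.out, hb.1]
    · exact show x < a + b by linarith [ha.1, hb.out]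
    · exact hab.2.2
  rw [conv_real_Ioi, ← measureReal_prod_prod, ← measureReal_prod_prod,
    ← measureReal_union hdisj (measurableSet_Ioc.prod measurableSet_Ioi),
    ← measureReal_union hdisj_joint (measurableSet_jointTail K x)]
  exact measureReal_mono hsub

lemma add_shift_le_conv_real_Ioi {t x : ℝ} (hx : t ≤ x) :
    μ.real (Ioi x) * ν.real (Ici 0) + μ.real (Icc 0 t) * ν.real (Ioi x) +
        μ.real (Ioc t x) * ν.real (Ioi (x - t)) ≤ (μ ∗ ν).real (Ioi x) := by
  have hdisj : Disjoint (Ioi x ×ˢ Ici (0 : ℝ)) (Icc 0 t ×ˢ Ioi x) :=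
    disjoint_left.2 fun p hp hp' => (hp'.1.2.trans hx).not_gt hp.1
  have hdisj_mid : Disjoint (Ioi x ×ˢ Ici (0 : ℝ) ∪ Icc 0 t ×ˢ Ioi x) (Ioc t x ×ˢ Ioi (x - t)) :=
    disjoint_union_left.2 ⟨disjoint_left.2 fun p hp hp' => hp'.1.2.not_gt hp.1,
      disjoint_left.2 fun p hp hp' => hp.1.2.not_gt hp'.1.1⟩
  have hsub : (Ioi x ×ˢ Ici (0 : ℝ) ∪ Icc 0 t ×ˢ Ioi x) ∪ Ioc t x ×ˢ Ioi (x - t) ⊆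
      {p : ℝ × ℝ | x < p.1 + p.2} := by
    rintro ⟨a, b⟩ ((⟨ha, hb⟩ | ⟨ha, hb⟩) | ⟨ha, hb⟩)
    · exact show x < a + b by linarith [ha.out, hb.out]
    · exact show x < a + b by linarith [ha.1, hb.out]
    · exact show x < a + b by linarith [ha.1, hb.out]
  rw [conv_real_Ioi, ← measureReal_prod_prod, ← measureReal_prod_prod, ← measureReal_prod_prod,
    ← measureReal_union hdisj (measurableSet_Icc.prod measurableSet_Ioi),
    ← measureReal_union hdisj_mid (measurableSet_Ioc.prod measurableSet_Ioi)]
  exact measureReal_mono hsub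

variable {μ ν}

lemma prod_real_jointTail_le {K C : ℝ} (hC : 0 ≤ C)
    (hνμ : ∀ z ≥ K, ν.real (Ioi z) ≤ C * μ.real (Ioi z)) (x : ℝ) :
    (ρ.prod ν).real (jointTail K x) ≤ C * (ρ.prod μ).real (jointTail K x) := by
  have hsection (a : ℝ) : ν (Prod.mk a ⁻¹' jointTail K x) ≤
      ENNReal.ofReal C * μ (Prod.mk a ⁻¹' jointTail K x) := by
    rcases lt_or_ge K a with ha | ha
    · rw [preimage_prodMk_jointTail ha, ← ofReal_measureReal (μ := ν),
        ← ofReal_measureReal (μ := μ), ← ENNReal.ofReal_mul hC]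
      exact ENNReal.ofReal_le_ofReal (hνμ _ (le_max_left _ _))
    · simp [preimage_prodMk_jointTail_of_le ha]
  have hprod : (ρ.prod ν) (jointTail K x) ≤ ENNReal.ofReal C * (ρ.prod μ) (jointTail K x) := by
    rw [Measure.prod_apply (measurableSet_jointTail K x),
      Measure.prod_apply (measurableSet_jointTail K x),
      ← lintegral_const_mul' _ _ ENNReal.ofReal_ne_top]
    exact lintegral_mono hsection
  have hreal := ENNReal.toReal_mono (by finiteness) hprod
  rwa [ENNReal.toReal_mul, ENNReal.toReal_ofReal hC] at hreal

lemma Subexponential.real_Ioi_pos (hμ : Subexponential μ) (x : ℝ) : 0 < μ.real (Ioi x) :=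
  calc 0 < μ.real (Ioi (max x 1)) :=
        ENNReal.toReal_pos (hμ.1 _ (lt_max_of_lt_right one_pos)).ne' (measure_ne_top _ _)
    _ ≤ μ.real (Ioi x) := measureReal_mono (Ioi_subset_Ioi (le_max_left x 1))

end FiniteMeasure

section LongTailed

variable {μ ν : Measure ℝ}

lemma IsLongTailed.eventually_real_Ioi_pos (hμ : IsLongTailed μ) :
    ∀ᶠ x in atTop, 0 < μ.real (Ioi x) := by
  filter_upwards [(hμ 0).eventually_ne one_ne_zero] with x hx
  exact measureReal_nonneg.lt_of_ne fun h => hx (by rw [← h, div_zero])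

lemma isLongTailed_of_tendsto_sub
    (hμ : ∀ t ≥ 0, Tendsto (fun x => μ.real (Ioi (x - t)) / μ.real (Ioi x)) atTop (𝓝 1)) :
    IsLongTailed μ := by
  intro t
  rcases le_total t 0 with ht | ht
  · simpa only [sub_neg_eq_add] using hμ (-t) (neg_nonneg.2 ht)
  · have hshift := (hμ t ht).comp (tendsto_atTop_add_const_right atTop t tendsto_id)
    have hinv := hshift.inv₀ one_ne_zero
    simpa only [Function.comp_def, id_eq, add_sub_cancel_right, inv_div, inv_one] using hinv

lemma IsLongTailed.tendsto_shift_div {c : ℝ} (hμ : IsLongTailed μ)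
    (hνμ : Tendsto (fun x => ν.real (Ioi x) / μ.real (Ioi x)) atTop (𝓝 c)) (t : ℝ) :
    Tendsto (fun x => ν.real (Ioi (x + t)) / μ.real (Ioi x)) atTop (𝓝 c) := by
  have hshift : Tendsto (fun x : ℝ => x + t) atTop atTop :=
    tendsto_atTop_add_const_right atTop t tendsto_id
  have hprod := (hνμ.comp hshift).mul (hμ t)
  rw [mul_one] at hprod
  refine hprod.congr' ?_
  filter_upwards [hshift.eventually hμ.eventually_real_Ioi_pos] with x hx
  exact div_mul_div_cancel₀ hx.ne'

lemma IsLongTailed.isBigO_of_tendsto_div {c : ℝ} (hμ : IsLongTailed μ)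
    (hνμ : Tendsto (fun x => ν.real (Ioi x) / μ.real (Ioi x)) atTop (𝓝 c)) :
    (fun x => ν.real (Ioi x)) =O[atTop] fun x => μ.real (Ioi x) :=
  isBigO_of_div_tendsto_nhds
    (hμ.eventually_real_Ioi_pos.mono fun _ hx h => absurd h hx.ne') c hνμ

end LongTailed

section ProbabilityMeasure

variable {μ : Measure ℝ} [IsProbabilityMeasure μ]

theorem Subexponential.isLongTailed (hsub : Subexponential μ) (hμ : μ (Ici 0) = 1) :
    IsLongTailed μ := by
  have hμ_real : μ.real (Ici 0) = 1 := by rw [measureReal_def, hμ, ENNReal.toReal_one]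
  have hconv : Tendsto (fun x => (μ ∗ μ).real (Ioi x) / μ.real (Ioi x)) atTop (𝓝 2) := hsub.2
  refine isLongTailed_of_tendsto_sub fun t ht => ?_
  have hsplit : μ.real (Icc 0 t) + μ.real (Ioi t) = 1 := by
    rw [← hμ_real, ← Icc_union_Ioi_eq_Ici ht, measureReal_union _ measurableSet_Ioi]
    exact disjoint_left.2 fun a ha ha' => ha.2.not_gt ha'
  have htail := hsub.real_Ioi_pos t
  have hmid := tendsto_real_Ioc_atTop μ t
  have hupper : Tendsto (fun x => ((μ ∗ μ).real (Ioi x) / μ.real (Ioi x) -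
      (1 + μ.real (Icc 0 t))) / μ.real (Ioc t x)) atTop (𝓝 1) := by
    have hquot := (hconv.sub_const (1 + μ.real (Icc 0 t))).div hmid htail.ne'
    rwa [show 2 - (1 + μ.real (Icc 0 t)) = μ.real (Ioi t) by linarith, div_self htail.ne'] at hquot
  refine tendsto_of_tendsto_of_tendsto_of_le_of_le' tendsto_const_nhds hupper ?_ ?_
  · refine .of_forall fun x => (one_le_div (hsub.real_Ioi_pos x)).2 ?_
    exact measureReal_mono (Ioi_subset_Ioi (sub_le_self x ht))
  · filter_upwards [eventually_ge_atTop t, hmid.eventually_const_lt htail] with x hx hxmid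
    have hFx := hsub.real_Ioi_pos x
    have hbound := add_shift_le_conv_real_Ioi μ μ hx
    rw [hμ_real] at hbound
    rw [le_div_iff₀ hxmid, le_sub_iff_add_le, le_div_iff₀ hFx]
    field_simp
    linarith

lemma Subexponential.eventually_prod_self_jointTail_div_lt (hsub : Subexponential μ)
    (hlong : IsLongTailed μ) {ε : ℝ} (hε : 0 < ε) :
    ∀ᶠ K in atTop, ∀ᶠ x in atTop,
      (μ.prod μ).real (jointTail K x) / μ.real (Ioi x) < ε := by
  have hconv : Tendsto (fun x => (μ ∗ μ).real (Ioi x) / μ.real (Ioi x)) atTop (𝓝 2) := hsub.2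
  have hlevel : Tendsto (fun K => 2 - 2 * μ.real (Ioc (-K) K)) atTop (𝓝 0) := by
    simpa using ((tendsto_real_Ioc_neg_atTop μ).const_mul 2).const_sub 2
  filter_upwards [hlevel.eventually_lt_const hε] with K hK
  have hupper : Tendsto (fun x => (μ ∗ μ).real (Ioi x) / μ.real (Ioi x) -
      2 * (μ.real (Ioi (x + K)) / μ.real (Ioi x) * μ.real (Ioc (-K) K))) atTop
      (𝓝 (2 - 2 * μ.real (Ioc (-K) K))) := by
    simpa only [one_mul] using
      hconv.sub (((hlong K).mul_const (μ.real (Ioc (-K) K))).const_mul 2)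
  filter_upwards [hupper.eventually_lt_const hK, eventually_ge_atTop 0] with x hx hx0
  refine lt_of_le_of_lt ?_ hx
  have hbound := add_jointTail_le_conv_real_Ioi μ μ K hx0
  calc (μ.prod μ).real (jointTail K x) / μ.real (Ioi x)
      ≤ ((μ ∗ μ).real (Ioi x) - 2 * (μ.real (Ioi (x + K)) * μ.real (Ioc (-K) K))) /
          μ.real (Ioi x) := by
        gcongr
        linarith
    _ = (μ ∗ μ).real (Ioi x) / μ.real (Ioi x) -
          2 * (μ.real (Ioi (x + K)) / μ.real (Ioi x) * μ.real (Ioc (-K) K)) := by ring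

lemma Subexponential.eventually_prod_jointTail_div_lt {ν : Measure ℝ} [IsFiniteMeasure ν]
    (hsub : Subexponential μ) (hlong : IsLongTailed μ)
    (hνμ : (fun x => ν.real (Ioi x)) =O[atTop] fun x => μ.real (Ioi x))
    {ε : ℝ} (hε : 0 < ε) :
    ∀ᶠ K in atTop, ∀ᶠ x in atTop,
      (μ.prod ν).real (jointTail K x) / μ.real (Ioi x) < ε := by
  obtain ⟨C, hC, hνμC⟩ := hνμ.exists_pos
  filter_upwards [hsub.eventually_prod_self_jointTail_div_lt hlong (div_pos hε hC),
    eventually_forall_ge_atTop.2 hνμC.bound] with K hself hdom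
  have hdom_real : ∀ z ≥ K, ν.real (Ioi z) ≤ C * μ.real (Ioi z) := fun z hz => by
    simpa only [Real.norm_of_nonneg measureReal_nonneg] using hdom z hz
  filter_upwards [hself] with x hx
  calc (μ.prod ν).real (jointTail K x) / μ.real (Ioi x)
      ≤ C * (μ.prod μ).real (jointTail K x) / μ.real (Ioi x) := by
        gcongr
        exact prod_real_jointTail_le μ hC.le hdom_real x
    _ = C * ((μ.prod μ).real (jointTail K x) / μ.real (Ioi x)) := mul_div_assoc _ _ _
    _ < ε := (lt_div_iff₀' hC).1 hx

variable {ν : Measure ℝ} [IsProbabilityMeasure ν]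

lemma IsLongTailed.eventually_lt_conv_div {a c : ℝ} (hlong : IsLongTailed μ)
    (hνμ : Tendsto (fun x => ν.real (Ioi x) / μ.real (Ioi x)) atTop (𝓝 c)) (ha : a < 1 + c) :
    ∀ᶠ x in atTop, a < (μ ∗ ν).real (Ioi x) / μ.real (Ioi x) := by
  have hlevel : Tendsto (fun K => ν.real (Ioc (-K) K) + c * μ.real (Ioc (-K) K)) atTop
      (𝓝 (1 + c)) := by
    simpa using (tendsto_real_Ioc_neg_atTop ν).add
      ((tendsto_real_Ioc_neg_atTop μ).const_mul c)
  obtain ⟨K, hK⟩ := (hlevel.eventually_const_lt ha).exists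
  have hlower : Tendsto (fun x =>
      μ.real (Ioi (x + K)) / μ.real (Ioi x) * ν.real (Ioc (-K) K) +
        ν.real (Ioi (x + K)) / μ.real (Ioi x) * μ.real (Ioc (-K) K)) atTop
      (𝓝 (ν.real (Ioc (-K) K) + c * μ.real (Ioc (-K) K))) := by
    simpa only [one_mul] using ((hlong K).mul_const (ν.real (Ioc (-K) K))).add
      ((hlong.tendsto_shift_div hνμ K).mul_const (μ.real (Ioc (-K) K)))
  filter_upwards [hlower.eventually_const_lt hK, eventually_ge_atTop 0] with x hx hx0
  refine hx.trans_le ?_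
  calc μ.real (Ioi (x + K)) / μ.real (Ioi x) * ν.real (Ioc (-K) K) +
        ν.real (Ioi (x + K)) / μ.real (Ioi x) * μ.real (Ioc (-K) K)
      = (μ.real (Ioi (x + K)) * ν.real (Ioc (-K) K) +
          μ.real (Ioc (-K) K) * ν.real (Ioi (x + K))) / μ.real (Ioi x) := by ring
    _ ≤ (μ ∗ ν).real (Ioi x) / μ.real (Ioi x) := by
        gcongr
        exact (le_add_of_nonneg_right measureReal_nonneg).trans
          (add_jointTail_le_conv_real_Ioi μ ν K hx0)

lemma Subexponential.eventually_conv_div_lt {b c : ℝ} (hsub : Subexponential μ)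
    (hlong : IsLongTailed μ)
    (hνμ : Tendsto (fun x => ν.real (Ioi x) / μ.real (Ioi x)) atTop (𝓝 c)) (hb : 1 + c < b) :
    ∀ᶠ x in atTop, (μ ∗ ν).real (Ioi x) / μ.real (Ioi x) < b := by
  obtain ⟨b', hb', hb'b⟩ := exists_between hb
  obtain ⟨K, hjoint⟩ := (hsub.eventually_prod_jointTail_div_lt hlong
    (hlong.isBigO_of_tendsto_div hνμ) (sub_pos.2 hb'b)).exists
  have hsingle := (hlong (-K)).add (hlong.tendsto_shift_div hνμ (-K))
  filter_upwards [hjoint, hsingle.eventually_lt_const hb'] with x hxjoint hxsingle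
  have hbound := conv_real_Ioi_le μ ν K x
  simp only [probReal_univ, mul_one, one_mul, sub_eq_add_neg x K] at hbound
  calc (μ ∗ ν).real (Ioi x) / μ.real (Ioi x)
      ≤ (μ.real (Ioi (x + -K)) + ν.real (Ioi (x + -K)) + (μ.prod ν).real (jointTail K x)) /
          μ.real (Ioi x) := by gcongr
    _ = μ.real (Ioi (x + -K)) / μ.real (Ioi x) + ν.real (Ioi (x + -K)) / μ.real (Ioi x) +
          (μ.prod ν).real (jointTail K x) / μ.real (Ioi x) := by rw [add_div, add_div]
    _ < b := by linarith

theorem Subexponential.tendsto_conv_div {c : ℝ} (hsub : Subexponential μ) (hlong : IsLongTailed μ)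
    (hνμ : Tendsto (fun x => ν.real (Ioi x) / μ.real (Ioi x)) atTop (𝓝 c)) :
    Tendsto (fun x => (μ ∗ ν).real (Ioi x) / μ.real (Ioi x)) atTop (𝓝 (1 + c)) :=
  tendsto_order.2 ⟨fun _ ha => hlong.eventually_lt_conv_div hνμ ha,
    fun _ hb => hsub.eventually_conv_div_lt hlong hνμ hb⟩

end ProbabilityMeasure

theorem stmt0_general {μ ν : Measure ℝ} [IsProbabilityMeasure μ] [IsProbabilityMeasure ν]
    (hlong : IsLongTailed μ) (hsub : Subexponential μ) {c : ℝ}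
    (hνμ : Tendsto (fun x => ν.real (Ioi x) / μ.real (Ioi x)) atTop (𝓝 c)) :
    Tendsto (fun x => (μ ∗ ν).real (Ioi x) / (μ.real (Ioi x) + ν.real (Ioi x))) atTop (𝓝 1) := by
  have hc : 0 ≤ c := ge_of_tendsto' hνμ fun _ => by positivity
  have hne : 1 + c ≠ 0 := by positivity
  have hquot := (hsub.tendsto_conv_div hlong hνμ).div (hνμ.const_add 1) hne
  rw [div_self hne] at hquot
  refine hquot.congr fun x => ?_
  have hFx : μ.real (Ioi x) ≠ 0 := (hsub.real_Ioi_pos x).ne'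
  rw [Pi.div_apply, one_add_div hFx, div_div_div_cancel_right₀ hFx]

theorem stmt0 (μ ν : Measure ℝ) [IsProbabilityMeasure μ] [IsProbabilityMeasure ν]
    (hμ : μ (Ioi 0) = 1) (hν : ν (Ici 0) = 1)
    (hsub : Subexponential μ) (c : ℝ) (hc : 0 < c)
    (hG : Tendsto (fun x : ℝ => (ν (Ioi x)).toReal / (μ (Ioi x)).toReal)
      atTop (nhds c)) :
    Tendsto (fun x : ℝ =>
        ((μ.conv ν) (Ioi x)).toReal / ((μ (Ioi x)).toReal + (ν (Ioi x)).toReal))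
      atTop (nhds 1) :=
  have hμ_Ici : μ (Ici 0) = 1 := le_antisymm prob_le_one (hμ ▸ measure_mono Ioi_subset_Ici_self)
  stmt0_general (hsub.isLongTailed hμ_Ici) hsub hG
end

section
/- Let μ be a probability measure on ℝ with μ((0,∞)) = 1 and tail F̄(x) := μ((x,∞)). Suppose there exist α ≥ 0 and a measurable function H : (0,∞) → (0,∞) that is slowly varying (i.e., for every c > 0, H(cx)/H(x) → 1 as x → ∞) such that F̄(x) / (x^{-α} H(x)) → 1 as x → ∞. Then μ is subexponential. -/
/-!
A sum of two independent variables is large essentially only when one of them is. Write `F̄` for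
tails and take `c` close to `1`. For `c < 1`, the event `X + Y > x` forces `X > c x`, or `Y > c x`,
or both `X > (1 - c) x` and `Y > (1 - c) x`. For `c > 1`, it contains the events
`X > c x, Y > (1 - c) x` and `Y > c x, X > (1 - c) x`, where now `(1 - c) x → -∞`. A product of two
tails at points tending to `∞` is negligible, so in both cases the resulting bound is asymptotic to
`F̄_X (c x) + F̄_Y (c x)`. If `F̄_X + F̄_Y` is regularly varying of index `ρ`, this is asymptotic to
`c ^ ρ * (F̄_X x + F̄_Y x)`, and `c ^ ρ → 1` as `c → 1`.
-/

open MeasureTheory Filter Set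

open ProbabilityTheory Asymptotics
open scoped Topology

lemma tendsto_rpow_const_nhds_one (ρ : ℝ) : Tendsto (fun c : ℝ => c ^ ρ) (𝓝 1) (𝓝 1) := by
  simpa using (Real.continuousAt_rpow_const 1 ρ (.inl one_ne_zero)).tendsto

/-- Regular variation at infinity of index `ρ`; slow variation is the case `ρ = 0`. Since
`0 / 0 = 0`, the case `c = 1` forces `f` to be eventually nonzero. -/
def RegularlyVarying (f : ℝ → ℝ) (ρ : ℝ) : Prop :=
  ∀ c > 0, Tendsto (fun x => f (c * x) / f x) atTop (𝓝 (c ^ ρ))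

namespace RegularlyVarying

variable {f g : ℝ → ℝ} {ρ σ : ℝ}

protected lemma rpow (ρ : ℝ) : RegularlyVarying (fun x => x ^ ρ) ρ := by
  intro c hc
  refine tendsto_const_nhds.congr' ?_
  filter_upwards [eventually_gt_atTop 0] with x hx
  rw [Real.mul_rpow hc.le hx.le, mul_div_cancel_right₀ _ (Real.rpow_pos_of_pos hx ρ).ne']

protected lemma mul (hf : RegularlyVarying f ρ) (hg : RegularlyVarying g σ) :
    RegularlyVarying (fun x => f x * g x) (ρ + σ) := by
  intro c hc
  simpa only [mul_div_mul_comm, Real.rpow_add hc] using (hf c hc).mul (hg c hc)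

protected lemma const_mul {a : ℝ} (ha : a ≠ 0) (hf : RegularlyVarying f ρ) :
    RegularlyVarying (fun x => a * f x) ρ := by
  intro c hc
  simpa only [mul_div_mul_left _ _ ha] using hf c hc

lemma of_isEquivalent (hg : RegularlyVarying g ρ) (hfg : f ~[atTop] g) :
    RegularlyVarying f ρ := by
  intro c hc
  have hscale : Tendsto (fun x => c * x) atTop atTop := tendsto_id.const_mul_atTop hc
  exact ((hfg.comp_tendsto hscale).div hfg).symm.tendsto_nhds (hg c hc)

lemma eventually_ne_zero (hf : RegularlyVarying f ρ) : ∀ᶠ x in atTop, f x ≠ 0 := by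
  have hone := hf 1 one_pos
  rw [Real.one_rpow] at hone
  filter_upwards [hone.eventually_ne one_ne_zero] with x hx
  exact (div_ne_zero_iff.1 hx).2

end RegularlyVarying

/-- The tail `F̄ x = μ (x, ∞)` of a measure on the line, as a real number. -/
def tail (μ : Measure ℝ) (x : ℝ) : ℝ := μ.real (Ioi x)

section Tail

variable (μ ν : Measure ℝ)

lemma tail_nonneg (x : ℝ) : 0 ≤ tail μ x := measureReal_nonneg

lemma tail_antitone [IsFiniteMeasure μ] : Antitone (tail μ) :=
  fun _ _ hxy => measureReal_mono (Ioi_subset_Ioi hxy)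

lemma tail_eq_one_sub_cdf [IsProbabilityMeasure μ] (x : ℝ) : tail μ x = 1 - cdf μ x := by
  rw [tail, ← compl_Iic, probReal_compl_eq_one_sub measurableSet_Iic, cdf_eq_real]

lemma tail_le_one [IsProbabilityMeasure μ] (x : ℝ) : tail μ x ≤ 1 := measureReal_le_one

lemma tendsto_tail_atTop [IsProbabilityMeasure μ] : Tendsto (tail μ) atTop (𝓝 0) := by
  simpa [← tail_eq_one_sub_cdf] using (tendsto_cdf_atTop μ).const_sub 1

lemma tendsto_tail_atBot [IsProbabilityMeasure μ] : Tendsto (tail μ) atBot (𝓝 1) := by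
  simpa [← tail_eq_one_sub_cdf] using (tendsto_cdf_atBot μ).const_sub 1

lemma tail_conv (x : ℝ) :
    tail (μ ∗ ν) x = (μ.prod ν).real {p | x < p.1 + p.2} :=
  map_measureReal_apply (by fun_prop) measurableSet_Ioi

lemma tail_conv_le [IsProbabilityMeasure μ] [IsProbabilityMeasure ν] (a b : ℝ) :
    tail (μ ∗ ν) (a + b) ≤ tail μ a + tail ν a + tail μ b * tail ν b := by
  have hcover : {p : ℝ × ℝ | a + b < p.1 + p.2} ⊆
      (Ioi a ×ˢ univ ∪ univ ×ˢ Ioi a) ∪ Ioi b ×ˢ Ioi b := by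
    rintro ⟨y, z⟩ hyz
    simp only [mem_ofPred_eq, mem_union, mem_prod, mem_Ioi, mem_univ, and_true, true_and] at *
    grind
  calc tail (μ ∗ ν) (a + b)
      ≤ (μ.prod ν).real ((Ioi a ×ˢ univ ∪ univ ×ˢ Ioi a) ∪ Ioi b ×ˢ Ioi b) := by
        rw [tail_conv]
        exact measureReal_mono hcover
    _ ≤ (μ.prod ν).real (Ioi a ×ˢ univ) + (μ.prod ν).real (univ ×ˢ Ioi a) +
          (μ.prod ν).real (Ioi b ×ˢ Ioi b) :=
        (measureReal_union_le _ _).trans (by gcongr; exact measureReal_union_le _ _)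
    _ = tail μ a + tail ν a + tail μ b * tail ν b := by
        simp only [measureReal_prod_prod, probReal_univ, mul_one, one_mul, tail]

lemma le_tail_conv [IsFiniteMeasure μ] [IsFiniteMeasure ν] {a b : ℝ} (hba : b ≤ a) :
    tail μ a * tail ν b + tail μ b * tail ν a - tail μ a * tail ν a ≤
      tail (μ ∗ ν) (a + b) := by
  have hinter : (Ioi a ×ˢ Ioi b) ∩ (Ioi b ×ˢ Ioi a) = Ioi a ×ˢ Ioi a := by
    rw [prod_inter_prod, Ioi_inter_Ioi, Ioi_inter_Ioi, max_eq_left hba, max_eq_right hba]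
  have hsubset : Ioi a ×ˢ Ioi b ∪ Ioi b ×ˢ Ioi a ⊆ {p : ℝ × ℝ | a + b < p.1 + p.2} := by
    rintro ⟨y, z⟩ hyz
    simp only [mem_ofPred_eq, mem_union, mem_prod, mem_Ioi] at *
    grind
  have hunion := measureReal_union_add_inter (μ := μ.prod ν) (s := Ioi a ×ˢ Ioi b)
    (t := Ioi b ×ˢ Ioi a) (measurableSet_Ioi.prod measurableSet_Ioi)
  simp only [hinter, measureReal_prod_prod] at hunion
  calc tail μ a * tail ν b + tail μ b * tail ν a - tail μ a * tail ν a
      = (μ.prod ν).real (Ioi a ×ˢ Ioi b ∪ Ioi b ×ˢ Ioi a) := by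
        simp only [tail]
        linarith
    _ ≤ tail (μ ∗ ν) (a + b) := by
        rw [tail_conv]
        exact measureReal_mono hsubset

lemma tail_conv_le_add_mul_add [IsProbabilityMeasure μ] [IsProbabilityMeasure ν] (a b : ℝ) :
    tail (μ ∗ ν) (a + b) ≤ tail μ a + tail ν a + tail μ b * (tail μ b + tail ν b) := by
  have hμb := tail_nonneg μ b
  refine (tail_conv_le μ ν a b).trans ?_
  gcongr
  exact le_add_of_nonneg_left hμb

lemma add_mul_sub_le_tail_conv [IsProbabilityMeasure μ] [IsProbabilityMeasure ν] {a b : ℝ}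
    (hba : b ≤ a) :
    (tail μ a + tail ν a) * (tail μ b * tail ν b - tail μ a) ≤ tail (μ ∗ ν) (a + b) := by
  have hμ : tail μ a * (tail μ b * tail ν b) ≤ tail μ a * tail ν b :=
    mul_le_mul_of_nonneg_left (mul_le_of_le_one_left (tail_nonneg ν b) (tail_le_one μ b))
      (tail_nonneg μ a)
  have hν : tail ν a * (tail μ b * tail ν b) ≤ tail ν a * tail μ b :=
    mul_le_mul_of_nonneg_left (mul_le_of_le_one_right (tail_nonneg μ b) (tail_le_one ν b))
      (tail_nonneg ν a)
  linarith [le_tail_conv μ ν hba, mul_self_nonneg (tail μ a)]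

end Tail

section Convolution

variable {μ ν : Measure ℝ} {ρ : ℝ}

lemma RegularlyVarying.tail_pos [IsFiniteMeasure μ] (h : RegularlyVarying (tail μ) ρ) (x : ℝ) :
    0 < tail μ x := by
  obtain ⟨y, hy, hxy⟩ := (h.eventually_ne_zero.and (eventually_ge_atTop x)).exists
  exact ((tail_nonneg μ y).lt_of_ne' hy).trans_le (tail_antitone μ hxy)

lemma RegularlyVarying.eventually_tail_add_pos
    (h : RegularlyVarying (fun x => tail μ x + tail ν x) ρ) :
    ∀ᶠ x in atTop, 0 < tail μ x + tail ν x :=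
  h.eventually_ne_zero.mono fun x hx =>
    (add_nonneg (tail_nonneg μ x) (tail_nonneg ν x)).lt_of_ne' hx

variable [IsProbabilityMeasure μ] [IsProbabilityMeasure ν]

lemma RegularlyVarying.eventually_tail_conv_div_lt
    (h : RegularlyVarying (fun x => tail μ x + tail ν x) ρ) {u : ℝ} (hu : 1 < u) :
    ∀ᶠ x in atTop, tail (μ ∗ ν) x / (tail μ x + tail ν x) < u := by
  have hrpow : Tendsto (fun c : ℝ => c ^ ρ) (𝓝[<] 1) (𝓝 1) :=
    (tendsto_rpow_const_nhds_one ρ).mono_left nhdsWithin_le_nhds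
  obtain ⟨c, hcu, hc0, hc1⟩ :=
    ((hrpow.eventually_lt_const hu).and (Ioo_mem_nhdsLT zero_lt_one)).exists
  have hboth : Tendsto (fun x => tail μ ((1 - c) * x) *
      ((tail μ ((1 - c) * x) + tail ν ((1 - c) * x)) / (tail μ x + tail ν x))) atTop (𝓝 0) := by
    have hscale : Tendsto (fun x => (1 - c) * x) atTop atTop :=
      tendsto_id.const_mul_atTop (sub_pos.2 hc1)
    simpa using ((tendsto_tail_atTop μ).comp hscale).mul (h (1 - c) (sub_pos.2 hc1))
  have hlim := (h c hc0).add hboth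
  rw [add_zero] at hlim
  filter_upwards [hlim.eventually_lt_const hcu, h.eventually_tail_add_pos] with x hx hpos
  refine lt_of_le_of_lt ?_ hx
  rw [← mul_div_assoc, ← add_div]
  gcongr
  calc tail (μ ∗ ν) x = tail (μ ∗ ν) (c * x + (1 - c) * x) := by ring_nf
    _ ≤ tail μ (c * x) + tail ν (c * x) +
          tail μ ((1 - c) * x) * (tail μ ((1 - c) * x) + tail ν ((1 - c) * x)) :=
        tail_conv_le_add_mul_add μ ν _ _

lemma RegularlyVarying.eventually_lt_tail_conv_div
    (h : RegularlyVarying (fun x => tail μ x + tail ν x) ρ) {l : ℝ} (hl : l < 1) :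
    ∀ᶠ x in atTop, l < tail (μ ∗ ν) x / (tail μ x + tail ν x) := by
  have hrpow : Tendsto (fun c : ℝ => c ^ ρ) (𝓝[>] 1) (𝓝 1) :=
    (tendsto_rpow_const_nhds_one ρ).mono_left nhdsWithin_le_nhds
  obtain ⟨c, hlc, hc1⟩ := ((hrpow.eventually_const_lt hl).and self_mem_nhdsWithin).exists
  have hc0 : 0 < c := zero_lt_one.trans hc1
  have hfactor : Tendsto (fun x => tail μ ((1 - c) * x) * tail ν ((1 - c) * x) - tail μ (c * x))
      atTop (𝓝 1) := by
    have hscale : Tendsto (fun x => c * x) atTop atTop := tendsto_id.const_mul_atTop hc0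
    have hscale' : Tendsto (fun x => (1 - c) * x) atTop atBot :=
      tendsto_id.const_mul_atTop_of_neg (sub_neg.2 hc1)
    simpa using (((tendsto_tail_atBot μ).comp hscale').mul
      ((tendsto_tail_atBot ν).comp hscale')).sub ((tendsto_tail_atTop μ).comp hscale)
  have hlim := (h c hc0).mul hfactor
  rw [mul_one] at hlim
  filter_upwards [hlim.eventually_const_lt hlc, h.eventually_tail_add_pos,
    eventually_ge_atTop 0] with x hx hpos hx0
  refine hx.trans_le ?_
  rw [div_mul_eq_mul_div]
  gcongr
  have hle : (1 - c) * x ≤ c * x :=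
    mul_le_mul_of_nonneg_right ((sub_neg.2 hc1).le.trans hc0.le) hx0
  calc (tail μ (c * x) + tail ν (c * x)) *
        (tail μ ((1 - c) * x) * tail ν ((1 - c) * x) - tail μ (c * x))
      ≤ tail (μ ∗ ν) (c * x + (1 - c) * x) := add_mul_sub_le_tail_conv μ ν hle
    _ = tail (μ ∗ ν) x := by ring_nf

theorem RegularlyVarying.tail_conv_isEquivalent
    (h : RegularlyVarying (fun x => tail μ x + tail ν x) ρ) :
    tail (μ ∗ ν) ~[atTop] fun x => tail μ x + tail ν x :=
  isEquivalent_of_tendsto_one <| tendsto_order.2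
    ⟨fun _ => h.eventually_lt_tail_conv_div, fun _ => h.eventually_tail_conv_div_lt⟩

end Convolution

theorem stmt1_general (μ : Measure ℝ) [IsProbabilityMeasure μ] {ρ : ℝ}
    (h : RegularlyVarying (tail μ) ρ) : Subexponential μ := by
  refine ⟨fun x _ => (ENNReal.toReal_pos_iff.1 (h.tail_pos x)).1, ?_⟩
  have hsum : RegularlyVarying (fun x => tail μ x + tail μ x) ρ := by
    simpa only [two_mul] using h.const_mul two_ne_zero
  have hconv : tail (μ ∗ μ) / tail μ ~[atTop] (fun x => tail μ x + tail μ x) / tail μ :=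
    hsum.tail_conv_isEquivalent.div .refl
  refine hconv.symm.tendsto_nhds (tendsto_const_nhds.congr fun x => ?_)
  rw [Pi.div_apply, ← two_mul, mul_div_cancel_right₀ _ (h.tail_pos x).ne']

theorem stmt1 (μ : Measure ℝ) [IsProbabilityMeasure μ] (hμ : μ (Ioi 0) = 1)
    (α : ℝ) (hα : 0 ≤ α) (H : ℝ → ℝ) (hHmeas : Measurable H)
    (hHpos : ∀ x > (0 : ℝ), 0 < H x)
    (hslow : ∀ c > (0 : ℝ), Tendsto (fun x : ℝ => H (c * x) / H x) atTop (nhds 1))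
    (htail : Tendsto (fun x : ℝ => (μ (Ioi x)).toReal / (x ^ (-α) * H x))
      atTop (nhds 1)) :
    Subexponential μ := by
  have hH : RegularlyVarying H 0 := by simpa [RegularlyVarying] using hslow
  exact stmt1_general μ (((RegularlyVarying.rpow (-α)).mul hH).of_isEquivalent
    (isEquivalent_of_tendsto_one htail))
end

section
/- Let μ be a subexponential probability measure on ℝ with tail F̄(x) := μ((x,∞)). Then for every ε > 0, e^{εx} F̄(x) → +∞ as x → ∞. -/
open MeasureTheory Filter Set

/-!
Write `F` for the tail of `μ`. Splitting the event `X + Y > x` according to whether `X > x`,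
`X ≤ y` or `y < X ≤ x` gives
`(F(y) - F(x)) (F(x - y) - F(x)) ≤ (μ ∗ μ)((x,∞)) - 2 F(x) + F(x)²`.
For a subexponential law the right side is `o(F(x))`, while `F(y) - F(x) → F(y) > 0`; hence
`F(x - y) / F(x) → 1`, i.e. `μ` is long-tailed. Then `g(x) = e^{εx} F(x)` satisfies
`g(x + 1) / g(x) → e^ε > 1`, so `g` grows geometrically along the progression `a + n`, and the
monotonicity of `F` fills the gaps between its points.
-/

open scoped Topology

/-- A measure on `ℝ` is long-tailed if its tail is asymptotically invariant under every fixed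
shift. For a finite measure this forces a positive tail: once the tail vanishes, the quotient is
`0 / 0 = 0`, which is incompatible with the limit `1`. -/
def LongTailed (μ : Measure ℝ) : Prop :=
  ∀ y > 0, Tendsto (fun x ↦ μ.real (Ioi (x + y)) / μ.real (Ioi x)) atTop (𝓝 1)

section Analysis

variable {f : ℝ → ℝ} {ε : ℝ}

theorem exp_neg_mul_exp_mul_le_of_le_add_one (hf : Antitone f) (hf₀ : ∀ x, 0 ≤ f x) (hε : 0 ≤ ε)
    {x z : ℝ} (hxz : x ≤ z) (hzx : z ≤ x + 1) :
    Real.exp (-ε) * (Real.exp (ε * z) * f z) ≤ Real.exp (ε * x) * f x := by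
  have hexp : -ε + ε * z ≤ ε * x := by linarith [mul_le_mul_of_nonneg_left hzx hε]
  rw [← mul_assoc, ← Real.exp_add]
  exact mul_le_mul (Real.exp_le_exp.2 hexp) (hf hxz) (hf₀ z) (Real.exp_nonneg _)

theorem tendsto_exp_mul_add_nat_atTop {a δ : ℝ} (ha : 0 < f a) (hδε : δ < ε)
    (hstep : ∀ x ≥ a, Real.exp (-δ) * f x ≤ f (x + 1)) :
    Tendsto (fun n : ℕ ↦ Real.exp (ε * (a + n)) * f (a + n)) atTop atTop := by
  refine tendsto_atTop_of_geom_le (c := Real.exp (ε - δ)) ?_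
    (Real.one_lt_exp_iff.2 (sub_pos.2 hδε)) fun n ↦ ?_
  · simpa using mul_pos (Real.exp_pos _) ha
  · have hn := hstep (a + n) (le_add_of_nonneg_right n.cast_nonneg)
    calc
      Real.exp (ε - δ) * (Real.exp (ε * (a + n)) * f (a + n)) =
          Real.exp (ε * (a + n + 1)) * (Real.exp (-δ) * f (a + n)) := by
        rw [← mul_assoc, ← mul_assoc, ← Real.exp_add, ← Real.exp_add]
        ring_nf
      _ ≤ Real.exp (ε * (a + n + 1)) * f (a + n + 1) := by gcongr
      _ = Real.exp (ε * (a + (n + 1 : ℕ))) * f (a + (n + 1 : ℕ)) := by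
        rw [Nat.cast_succ, ← add_assoc]

theorem tendsto_exp_mul_atTop_of_tendsto_div_one (hf : Antitone f) (hf₀ : ∀ x, 0 ≤ f x)
    (hdiv : Tendsto (fun x ↦ f (x + 1) / f x) atTop (𝓝 1)) (hε : 0 < ε) :
    Tendsto (fun x ↦ Real.exp (ε * x) * f x) atTop atTop := by
  have hexp : Real.exp (-(ε / 2)) < 1 := Real.exp_lt_one_iff.2 (neg_neg_of_pos (half_pos hε))
  obtain ⟨a, ha⟩ := eventually_atTop.1 (hdiv.eventually_const_lt hexp)
  have hpos : ∀ x ≥ a, 0 < f x := fun x hx ↦ (hf₀ x).lt_of_ne' fun h ↦ by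
    have := ha x hx
    rw [h, div_zero] at this
    exact this.not_gt (Real.exp_pos _)
  have hstep : ∀ x ≥ a, Real.exp (-(ε / 2)) * f x ≤ f (x + 1) := fun x hx ↦
    ((lt_div_iff₀ (hpos x hx)).1 (ha x hx)).le
  have hseq := tendsto_exp_mul_add_nat_atTop (hpos a le_rfl) (half_lt_self hε) hstep
  have hceil : Tendsto (fun x ↦ ⌈x - a⌉₊) atTop atTop :=
    tendsto_nat_ceil_atTop.comp (tendsto_atTop_add_const_right _ (-a) tendsto_id)
  refine tendsto_atTop_mono' _ ?_ ((hseq.comp hceil).const_mul_atTop (Real.exp_pos (-ε)))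
  filter_upwards [eventually_ge_atTop a] with x hx
  have hceil_ge := Nat.le_ceil (x - a)
  have hceil_lt := Nat.ceil_lt_add_one (sub_nonneg.2 hx)
  exact exp_neg_mul_exp_mul_le_of_le_add_one hf hf₀ hε.le (by linarith) (by linarith)

end Analysis

section Tail

variable {μ : Measure ℝ}

theorem antitone_measureReal_Ioi [IsFiniteMeasure μ] : Antitone fun x ↦ μ.real (Ioi x) :=
  fun _ _ h ↦ measureReal_mono (Ioi_subset_Ioi h)

theorem tendsto_measureReal_Ioi_atTop [IsFiniteMeasure μ] :
    Tendsto (fun x ↦ μ.real (Ioi x)) atTop (𝓝 0) := by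
  have hInter : ⋂ x : ℝ, Ioi x = ∅ := iInter_eq_empty_iff.2 fun x ↦ ⟨x, self_notMem_Ioi⟩
  have h := tendsto_measure_iInter_atTop (μ := μ)
    (fun x : ℝ ↦ measurableSet_Ioi.nullMeasurableSet) antitone_Ioi ⟨0, measure_ne_top _ _⟩
  rw [hInter, measure_empty] at h
  exact (ENNReal.tendsto_toReal ENNReal.zero_ne_top).comp h

theorem LongTailed.tendsto_exp_mul_measureReal_Ioi [IsFiniteMeasure μ] (hμ : LongTailed μ) {ε : ℝ}
    (hε : 0 < ε) : Tendsto (fun x ↦ Real.exp (ε * x) * μ.real (Ioi x)) atTop atTop :=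
  tendsto_exp_mul_atTop_of_tendsto_div_one antitone_measureReal_Ioi (fun _ ↦ measureReal_nonneg)
    (hμ 1 one_pos) hε

theorem measureReal_mul_add_le_measureReal_conv_Ioi (μ ν : Measure ℝ) [IsFiniteMeasure μ]
    [IsFiniteMeasure ν] {x y : ℝ} (hyx : y ≤ x) :
    μ.real (Ioi x) * ν.real (Ici 0) + μ.real (Icc 0 y) * ν.real (Ioi x) +
      μ.real (Ioc y x) * ν.real (Ioi (x - y)) ≤ (μ.conv ν).real (Ioi x) := by
  have hdisj₁ : Disjoint (Ioi x ×ˢ Ici (0 : ℝ)) (Icc 0 y ×ˢ Ioi x) :=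
    Disjoint.set_prod_left (disjoint_left.2 fun a ha hay ↦ (hay.2.trans hyx).not_gt ha) _ _
  have hdisj₂ : Disjoint (Ioi x ×ˢ Ici (0 : ℝ) ∪ Icc 0 y ×ˢ Ioi x) (Ioc y x ×ˢ Ioi (x - y)) :=
    disjoint_union_left.2
      ⟨Disjoint.set_prod_left (disjoint_left.2 fun a ha hax ↦ hax.2.not_gt ha) _ _,
        Disjoint.set_prod_left (disjoint_left.2 fun a ha hay ↦ ha.2.not_gt hay.1) _ _⟩
  have hsub : Ioi x ×ˢ Ici (0 : ℝ) ∪ Icc 0 y ×ˢ Ioi x ∪ Ioc y x ×ˢ Ioi (x - y) ⊆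
      (fun p : ℝ × ℝ ↦ p.1 + p.2) ⁻¹' Ioi x := by
    rintro ⟨a, b⟩ ((⟨ha, hb⟩ | ⟨ha, hb⟩) | ⟨ha, hb⟩) <;>
    · simp only [mem_Ioi, mem_Ici, mem_Icc, mem_Ioc, mem_preimage] at *
      linarith
  rw [Measure.conv, map_measureReal_apply (by fun_prop) measurableSet_Ioi,
    ← measureReal_prod_prod, ← measureReal_prod_prod, ← measureReal_prod_prod,
    ← measureReal_union hdisj₁ (measurableSet_Icc.prod measurableSet_Ioi),
    ← measureReal_union hdisj₂ (measurableSet_Ioc.prod measurableSet_Ioi)]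
  exact measureReal_mono hsub

variable [IsProbabilityMeasure μ]

theorem measureReal_Icc_zero_of_ae_nonneg (hμ : ∀ᵐ x ∂μ, 0 ≤ x) (y : ℝ) :
    μ.real (Icc 0 y) = 1 - μ.real (Ioi y) := by
  have hae : Icc 0 y =ᵐ[μ] Iic y := by
    filter_upwards [hμ] with x hx
    exact propext (and_iff_right hx)
  rw [measureReal_congr hae, ← compl_Ioi, probReal_compl_eq_one_sub measurableSet_Ioi]

theorem measureReal_Ioi_sub_mul_sub_le (hμ : ∀ᵐ x ∂μ, 0 ≤ x) {x y : ℝ} (hyx : y ≤ x) :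
    (μ.real (Ioi y) - μ.real (Ioi x)) * (μ.real (Ioi (x - y)) - μ.real (Ioi x)) ≤
      (μ.conv μ).real (Ioi x) - 2 * μ.real (Ioi x) + μ.real (Ioi x) ^ 2 := by
  have hIci : μ.real (Ici 0) = 1 := by
    rw [Measure.real, (mem_ae_iff_prob_eq_one measurableSet_Ici).1 hμ, ENNReal.toReal_one]
  have hIoc : μ.real (Ioc y x) = μ.real (Ioi y) - μ.real (Ioi x) := by
    rw [← Ioi_sdiff_Ioi, measureReal_sdiff (Ioi_subset_Ioi hyx) measurableSet_Ioi]
  have hconv := measureReal_mul_add_le_measureReal_conv_Ioi μ μ hyx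
  rw [hIci, measureReal_Icc_zero_of_ae_nonneg hμ, hIoc] at hconv
  linarith

end Tail

namespace Subexponential

variable {μ : Measure ℝ}

theorem measureReal_Ioi_pos [IsFiniteMeasure μ] (hsub : Subexponential μ) (x : ℝ) :
    0 < μ.real (Ioi x) :=
  (ENNReal.toReal_pos (hsub.1 (max x 1) (by positivity)).ne' (measure_ne_top _ _)).trans_le
    (antitone_measureReal_Ioi (le_max_left x 1))

variable [IsProbabilityMeasure μ]

theorem tendsto_measureReal_Ioi_sub_div (hsub : Subexponential μ) (hμ : ∀ᵐ x ∂μ, 0 ≤ x) {y : ℝ}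
    (hy : 0 ≤ y) : Tendsto (fun x ↦ μ.real (Ioi (x - y)) / μ.real (Ioi x)) atTop (𝓝 1) := by
  have hpos := hsub.measureReal_Ioi_pos
  have htail : Tendsto (fun x ↦ μ.real (Ioi x)) atTop (𝓝 0) := tendsto_measureReal_Ioi_atTop
  have hupper : Tendsto (fun x ↦ 1 + ((μ.conv μ).real (Ioi x) / μ.real (Ioi x) - 2 +
      μ.real (Ioi x)) / (μ.real (Ioi y) - μ.real (Ioi x))) atTop (𝓝 1) := by
    have hden : Tendsto (fun x ↦ μ.real (Ioi y) - μ.real (Ioi x)) atTop (𝓝 (μ.real (Ioi y))) := by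
      simpa using htail.const_sub (μ.real (Ioi y))
    simpa [Measure.real] using
      (((hsub.2.sub_const 2).add htail).div hden (hpos y).ne').const_add 1
  refine tendsto_of_tendsto_of_tendsto_of_le_of_le' tendsto_const_nhds hupper ?_ ?_
  · exact .of_forall fun x ↦
      (one_le_div (hpos x)).2 (antitone_measureReal_Ioi (sub_le_self x hy))
  · filter_upwards [htail.eventually_lt_const (hpos y), eventually_ge_atTop y] with x hxy hyx
    have hx := hpos x
    rw [← sub_le_iff_le_add', le_div_iff₀ (sub_pos.2 hxy)]
    calc
      (μ.real (Ioi (x - y)) / μ.real (Ioi x) - 1) * (μ.real (Ioi y) - μ.real (Ioi x))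
      _ = (μ.real (Ioi y) - μ.real (Ioi x)) * (μ.real (Ioi (x - y)) - μ.real (Ioi x)) /
          μ.real (Ioi x) := by field_simp
      _ ≤ ((μ.conv μ).real (Ioi x) - 2 * μ.real (Ioi x) + μ.real (Ioi x) ^ 2) /
          μ.real (Ioi x) := by
        gcongr
        exact measureReal_Ioi_sub_mul_sub_le hμ hyx
      _ = (μ.conv μ).real (Ioi x) / μ.real (Ioi x) - 2 + μ.real (Ioi x) := by field_simp

theorem longTailed (hsub : Subexponential μ) (hμ : ∀ᵐ x ∂μ, 0 ≤ x) : LongTailed μ := fun y hy ↦ by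
  simpa using ((hsub.tendsto_measureReal_Ioi_sub_div hμ hy.le).comp
    (tendsto_atTop_add_const_right _ y tendsto_id)).inv₀ one_ne_zero

end Subexponential

theorem stmt3 (μ : Measure ℝ) [IsProbabilityMeasure μ] (hμ : μ (Ioi 0) = 1)
    (hsub : Subexponential μ) (ε : ℝ) (hε : 0 < ε) :
    Tendsto (fun x : ℝ => Real.exp (ε * x) * (μ (Ioi x)).toReal) atTop atTop := by
  have hpos : ∀ᵐ x ∂μ, 0 < x := (mem_ae_iff_prob_eq_one measurableSet_Ioi).2 hμ
  have hlong : LongTailed μ := hsub.longTailed (hpos.mono fun _ ↦ le_of_lt)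
  exact hlong.tendsto_exp_mul_measureReal_Ioi hε
end

section
/- Let μ be a σ-finite Borel measure on [0,∞) with μ({0}) = 0, and let g₁, g₂ : [0,∞) → ℝ be measurable functions such that for some λ₀ > 0, ∫ e^{-λ₀ γ} |gᵢ(γ)| μ(dγ) < ∞ for i = 1, 2, and g₂(γ) > 0 for all γ. For λ ≥ λ₀ set fᵢ(λ) := ∫ e^{-λγ} gᵢ(γ) μ(dγ). Assume: (i) for every b > 0, e^{bλ} f₂(λ) → +∞ as λ → ∞; (ii) g₁(γ)/g₂(γ) → 1 as γ → 0⁺. Then f₁(λ)/f₂(λ) → 1 as λ → ∞. -/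
/-!
A function that is nonpositive on `(0, δ)` has a Laplace transform bounded above by a multiple of
`exp (-δ l)`, because only `[δ, ∞)` contributes positively. If `h = o(g)` at `0⁺` with `g ≥ 0`
there, this applies to `‖h‖ - ε g` for a suitable `δ`, so the transform of `h` is at most `ε` times
that of `g` plus an exponentially small term, which is negligible because the transform of `g`
decays slower than any exponential. If `g₁ / g₂ → c`, take `h = g₁ - c g₂`.
-/

open MeasureTheory Filter Set

open scoped Topology Asymptotics

section LittleO

variable {α : Type*} {l : Filter α}

lemma tendsto_inv_smul_iff_isLittleO {𝕜 E : Type*} [NormedField 𝕜] [NormedAddCommGroup E]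
    [NormedSpace 𝕜 E] {f : α → E} {g : α → 𝕜} {c : E} (hg : ∀ᶠ x in l, g x ≠ 0) :
    Tendsto (fun x => (g x)⁻¹ • f x) l (𝓝 c) ↔ (fun x => f x - g x • c) =o[l] g := by
  have hnorm : (fun x => ‖f x - g x • c‖ / ‖g x‖) =ᶠ[l] fun x => ‖(g x)⁻¹ • f x - c‖ := by
    filter_upwards [hg] with x hx
    rw [div_eq_inv_mul, ← norm_inv, ← norm_smul, smul_sub, inv_smul_smul₀ hx]
  rw [← Asymptotics.isLittleO_norm_norm,
    Asymptotics.isLittleO_iff_tendsto' (hg.mono fun x hx h => absurd (norm_eq_zero.1 h) hx),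
    tendsto_congr' hnorm, tendsto_iff_norm_sub_tendsto_zero]

lemma isLittleO_exp_neg_of_tendsto_exp_mul_atTop {u F : α → ℝ}
    (hF : Tendsto (fun x => Real.exp (u x) * F x) l atTop) :
    (fun x => Real.exp (-u x)) =o[l] F := by
  have hone : (fun _ => (1 : ℝ)) =o[l] fun x => Real.exp (u x) * F x :=
    (Asymptotics.isLittleO_one_left_iff ℝ).2 (tendsto_norm_atTop_atTop.comp hF)
  refine ((Asymptotics.isBigO_refl (fun x => Real.exp (-u x)) l).mul_isLittleO hone).congr
    (fun x => mul_one _) fun x => ?_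
  rw [← mul_assoc, ← Real.exp_add, neg_add_cancel, Real.exp_zero, one_mul]

end LittleO

lemma ae_lt_of_measure_Iio_eq_zero {α : Type*} [LinearOrder α] [MeasurableSpace α] {μ : Measure α}
    {a : α} (hIio : μ (Iio a) = 0) (hatom : μ {a} = 0) : ∀ᵐ x ∂μ, a < x := by
  filter_upwards [measure_eq_zero_iff_ae_notMem.1 hIio,
    measure_eq_zero_iff_ae_notMem.1 hatom] with x hge hne
  exact lt_of_le_of_ne (not_lt.1 hge) (Ne.symm hne)

section Laplace

variable {E : Type*} [NormedAddCommGroup E] [NormedSpace ℝ E] {μ : Measure ℝ}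

/-- The Laplace transform at `l` of the vector measure `g μ`. It is an integral over the whole line;
that `μ` lives on the half-line is a hypothesis of the individual lemmas. -/
noncomputable def laplaceTransform (μ : Measure ℝ) (g : ℝ → E) (l : ℝ) : E :=
  ∫ γ, Real.exp (-l * γ) • g γ ∂μ

/-- Absolute convergence of the integral defining `laplaceTransform μ g l`. -/
def LaplaceIntegrable (μ : Measure ℝ) (g : ℝ → E) (l : ℝ) : Prop :=
  Integrable (fun γ => Real.exp (-l * γ) • g γ) μ

lemma LaplaceIntegrable.norm {g : ℝ → E} {l : ℝ} (hg : LaplaceIntegrable μ g l) :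
    LaplaceIntegrable μ (fun γ => ‖g γ‖) l := by
  simpa only [LaplaceIntegrable, norm_smul, Real.norm_eq_abs, Real.abs_exp, smul_eq_mul]
    using Integrable.norm hg

lemma LaplaceIntegrable.sub {g h : ℝ → E} {l : ℝ} (hg : LaplaceIntegrable μ g l)
    (hh : LaplaceIntegrable μ h l) : LaplaceIntegrable μ (fun γ => g γ - h γ) l := by
  simp only [LaplaceIntegrable, smul_sub]
  exact Integrable.sub hg hh

lemma LaplaceIntegrable.smul_const {g : ℝ → ℝ} {l : ℝ} (hg : LaplaceIntegrable μ g l) (c : E) :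
    LaplaceIntegrable μ (fun γ => g γ • c) l := by
  simpa only [LaplaceIntegrable, smul_assoc] using Integrable.smul_const hg c

lemma LaplaceIntegrable.mono {g : ℝ → E} {a l : ℝ} (hμ : ∀ᵐ γ ∂μ, 0 ≤ γ)
    (hg : LaplaceIntegrable μ g a) (hal : a ≤ l) : LaplaceIntegrable μ g l := by
  have hfactor (γ : ℝ) :
      Real.exp (-l * γ) • g γ = Real.exp (-(l - a) * γ) • Real.exp (-a * γ) • g γ := by
    rw [smul_smul, ← Real.exp_add]
    ring_nf
  simp only [LaplaceIntegrable, hfactor]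
  refine Integrable.bdd_smul hg 1 (by fun_prop) ?_
  filter_upwards [hμ] with γ hγ
  rw [Real.norm_eq_abs, Real.abs_exp, Real.exp_le_one_iff]
  exact mul_nonpos_of_nonpos_of_nonneg (neg_nonpos.2 (sub_nonneg.2 hal)) hγ

lemma laplaceTransform_sub {g h : ℝ → E} {l : ℝ} (hg : LaplaceIntegrable μ g l)
    (hh : LaplaceIntegrable μ h l) :
    laplaceTransform μ (fun γ => g γ - h γ) l =
      laplaceTransform μ g l - laplaceTransform μ h l := by
  simpa only [laplaceTransform, smul_sub] using integral_sub hg hh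

lemma laplaceTransform_smul_const [CompleteSpace E] (g : ℝ → ℝ) (c : E) (l : ℝ) :
    laplaceTransform μ (fun γ => g γ • c) l = laplaceTransform μ g l • c := by
  simp only [laplaceTransform, ← smul_assoc, integral_smul_const]

lemma norm_laplaceTransform_le (g : ℝ → E) (l : ℝ) :
    ‖laplaceTransform μ g l‖ ≤ laplaceTransform μ (fun γ => ‖g γ‖) l := by
  simpa only [laplaceTransform, norm_smul, Real.norm_eq_abs, Real.abs_exp, smul_eq_mul]
    using norm_integral_le_integral_norm (μ := μ) fun γ => Real.exp (-l * γ) • g γ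

lemma laplaceTransform_le_exp_mul_of_nonpos {k : ℝ → ℝ} {a l δ : ℝ} (hμ : ∀ᵐ γ ∂μ, 0 < γ)
    (hk : LaplaceIntegrable μ k a) (hnonpos : ∀ γ ∈ Ioo 0 δ, k γ ≤ 0) (hal : a ≤ l) :
    laplaceTransform μ k l ≤
      Real.exp (-(l - a) * δ) * laplaceTransform μ (fun γ => |k γ|) a := by
  rw [laplaceTransform, laplaceTransform, ← integral_const_mul]
  refine integral_mono_ae (hk.mono (hμ.mono fun _ => le_of_lt) hal)
    (Integrable.const_mul hk.norm _) ?_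
  filter_upwards [hμ] with γ hγ
  simp only [smul_eq_mul]
  rcases lt_or_ge γ δ with hnear | hfar
  · exact (mul_nonpos_of_nonneg_of_nonpos (Real.exp_pos _).le (hnonpos γ ⟨hγ, hnear⟩)).trans
      (by positivity)
  · have hexp : Real.exp (-l * γ) ≤ Real.exp (-(l - a) * δ) * Real.exp (-a * γ) := by
      rw [← Real.exp_add, Real.exp_le_exp]
      have hscale : (l - a) * δ ≤ (l - a) * γ :=
        mul_le_mul_of_nonneg_left hfar (sub_nonneg.2 hal)
      linarith
    calc Real.exp (-l * γ) * k γ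
        ≤ Real.exp (-l * γ) * |k γ| := by
          gcongr
          exact le_abs_self (k γ)
      _ ≤ Real.exp (-(l - a) * δ) * Real.exp (-a * γ) * |k γ| := by gcongr
      _ = Real.exp (-(l - a) * δ) * (Real.exp (-a * γ) * |k γ|) := mul_assoc ..

lemma norm_laplaceTransform_le_mul_add_exp_mul {h : ℝ → E} {g : ℝ → ℝ} {a l δ ε : ℝ}
    (hμ : ∀ᵐ γ ∂μ, 0 < γ) (hh : LaplaceIntegrable μ h a) (hg : LaplaceIntegrable μ g a)
    (hbound : ∀ γ ∈ Ioo 0 δ, ‖h γ‖ ≤ g γ * ε) (hal : a ≤ l) :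
    ‖laplaceTransform μ h l‖ ≤ laplaceTransform μ g l * ε +
      Real.exp (-(l - a) * δ) * laplaceTransform μ (fun γ => |‖h γ‖ - g γ * ε|) a := by
  have hμ₀ : ∀ᵐ γ ∂μ, 0 ≤ γ := hμ.mono fun _ => le_of_lt
  have hgε : LaplaceIntegrable μ (fun γ => g γ * ε) a := hg.smul_const ε
  calc ‖laplaceTransform μ h l‖
      ≤ laplaceTransform μ (fun γ => ‖h γ‖) l := norm_laplaceTransform_le h l
    _ = laplaceTransform μ g l * ε + laplaceTransform μ (fun γ => ‖h γ‖ - g γ * ε) l := by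
        rw [laplaceTransform_sub (hh.norm.mono hμ₀ hal) (hgε.mono hμ₀ hal), ← smul_eq_mul,
          ← laplaceTransform_smul_const]
        exact (add_sub_cancel _ _).symm
    _ ≤ _ := by
        gcongr
        exact laplaceTransform_le_exp_mul_of_nonpos hμ (hh.norm.sub hgε)
          (fun γ hγ => sub_nonpos.2 (hbound γ hγ)) hal

theorem laplaceTransform_isLittleO {h : ℝ → E} {g : ℝ → ℝ} {a : ℝ} (hμ : ∀ᵐ γ ∂μ, 0 < γ)
    (hh : LaplaceIntegrable μ h a) (hg : LaplaceIntegrable μ g a)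
    (hnonneg : ∀ᶠ γ in 𝓝[>] 0, 0 ≤ g γ)
    (hgrowth : ∀ b > 0, Tendsto (fun l => Real.exp (b * l) * laplaceTransform μ g l) atTop atTop)
    (hhg : h =o[𝓝[>] 0] g) :
    laplaceTransform μ h =o[atTop] laplaceTransform μ g := by
  refine Asymptotics.isLittleO_iff.2 fun ε hε => ?_
  have hnear : ∀ᶠ γ in 𝓝[>] 0, ‖h γ‖ ≤ g γ * (ε / 2) := by
    filter_upwards [hhg.bound (half_pos hε), hnonneg] with γ hbound hgγ
    rwa [Real.norm_of_nonneg hgγ, mul_comm] at hbound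
  obtain ⟨δ, hδ, hbound⟩ := mem_nhdsGT_iff_exists_Ioo_subset.1 hnear
  set C := laplaceTransform μ (fun γ => |‖h γ‖ - g γ * (ε / 2)|) a
  have htail : (fun l => Real.exp (-(l - a) * δ) * C) =o[atTop] laplaceTransform μ g := by
    refine ((isLittleO_exp_neg_of_tendsto_exp_mul_atTop (hgrowth δ hδ)).const_mul_left
      (Real.exp (a * δ) * C)).congr_left fun l => ?_
    rw [mul_right_comm, ← Real.exp_add]
    ring_nf
  filter_upwards [eventually_ge_atTop a, htail.bound (half_pos hε)] with l hal htail_le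
  calc ‖laplaceTransform μ h l‖
      ≤ laplaceTransform μ g l * (ε / 2) + Real.exp (-(l - a) * δ) * C :=
        norm_laplaceTransform_le_mul_add_exp_mul hμ hh hg hbound hal
    _ ≤ ‖laplaceTransform μ g l‖ * (ε / 2) + ε / 2 * ‖laplaceTransform μ g l‖ :=
        add_le_add (mul_le_mul_of_nonneg_right (Real.le_norm_self _) (half_pos hε).le)
          ((Real.le_norm_self _).trans htail_le)
    _ = ε * ‖laplaceTransform μ g l‖ := by ring

theorem stmt4_general [CompleteSpace E] {g₁ : ℝ → E} {g₂ : ℝ → ℝ} {a : ℝ} {c : E}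
    (hμ : ∀ᵐ γ ∂μ, 0 < γ) (hg₁ : LaplaceIntegrable μ g₁ a) (hg₂ : LaplaceIntegrable μ g₂ a)
    (hpos : ∀ᶠ γ in 𝓝[>] 0, 0 < g₂ γ)
    (hgrowth : ∀ b > 0, Tendsto (fun l => Real.exp (b * l) * laplaceTransform μ g₂ l) atTop atTop)
    (hratio : Tendsto (fun γ => (g₂ γ)⁻¹ • g₁ γ) (𝓝[>] 0) (𝓝 c)) :
    Tendsto (fun l => (laplaceTransform μ g₂ l)⁻¹ • laplaceTransform μ g₁ l) atTop (𝓝 c) := by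
  have hne : ∀ᶠ l in atTop, laplaceTransform μ g₂ l ≠ 0 :=
    ((hgrowth 1 one_pos).eventually_ne_atTop 0).mono fun _ => right_ne_zero_of_mul
  have hdiff : (fun γ => g₁ γ - g₂ γ • c) =o[𝓝[>] 0] g₂ :=
    (tendsto_inv_smul_iff_isLittleO (hpos.mono fun _ => ne_of_gt)).1 hratio
  refine (tendsto_inv_smul_iff_isLittleO hne).2 ?_
  refine (laplaceTransform_isLittleO hμ (hg₁.sub (hg₂.smul_const c)) hg₂
    (hpos.mono fun _ => le_of_lt) hgrowth hdiff).congr' ?_ EventuallyEq.rfl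
  filter_upwards [eventually_ge_atTop a] with l hal
  have hμ₀ : ∀ᵐ γ ∂μ, 0 ≤ γ := hμ.mono fun _ => le_of_lt
  rw [laplaceTransform_sub (hg₁.mono hμ₀ hal) ((hg₂.smul_const c).mono hμ₀ hal),
    laplaceTransform_smul_const]

end Laplace

/-- Tauberian-type lemma: if `g₁ ∼ g₂` at `0⁺` and the Laplace transform of `g₂` decays
slower than any exponential, then the Laplace transforms are asymptotically equivalent. -/
theorem stmt4 (μ : Measure ℝ) [SigmaFinite μ]
    (hsupp : μ (Iio 0) = 0) (hatom : μ {0} = 0)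
    (g₁ g₂ : ℝ → ℝ) (hg₁ : Measurable g₁) (hg₂ : Measurable g₂)
    (lam0 : ℝ) (hlam0 : 0 < lam0)
    (hint₁ : Integrable (fun γ => Real.exp (-lam0 * γ) * g₁ γ) μ)
    (hint₂ : Integrable (fun γ => Real.exp (-lam0 * γ) * g₂ γ) μ)
    (hpos : ∀ γ : ℝ, 0 < g₂ γ)
    (hf₂ : ∀ b > (0 : ℝ),
      Tendsto (fun l : ℝ => Real.exp (b * l) * ∫ γ, Real.exp (-l * γ) * g₂ γ ∂μ)
        atTop atTop)
    (hratio : Tendsto (fun γ : ℝ => g₁ γ / g₂ γ) (nhdsWithin 0 (Ioi 0)) (nhds 1)) :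
    Tendsto (fun l : ℝ =>
        (∫ γ, Real.exp (-l * γ) * g₁ γ ∂μ) / ∫ γ, Real.exp (-l * γ) * g₂ γ ∂μ)
      atTop (nhds 1) := by
  simp only [div_eq_inv_mul] at hratio ⊢
  exact stmt4_general (ae_lt_of_measure_Iio_eq_zero hsupp hatom) hint₁ hint₂
    (Eventually.of_forall hpos) hf₂ hratio
end

section
/- Let (Ω, ℱ, P) be a probability space with a filtration (𝒞_u)_{u ≥ 0} of sub-σ-algebras of ℱ. Let (W_t)_{t ≥ 0} be a family of nonnegative measurable random variables with 0 < E[W_t] < ∞ for every t > 0. Suppose that for each u ≥ 0 there is an integrable 𝒞_u-measurable random variable M_u such that E[W_t | 𝒞_u] / E[W_t] → M_u almost surely as t → ∞, and E[M_u] = 1. Then (M_u)_{u ≥ 0} is a nonnegative martingale with respect to (𝒞_u): M_u ≥ 0 a.s. for every u, and for all 0 ≤ u ≤ v, E[M_v | 𝒞_u] = M_u almost surely. -/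
/-!
The normalized conditional expectations `E[W t | 𝒞 u] / E[W t]` are nonnegative with mean one, and
their limit `M u` still has mean one, so by Scheffé's lemma the almost sure convergence is also
convergence in `L¹`. Conditional expectation is an `L¹` contraction, hence conditioning at a time
`v ≥ u` down to `𝒞 u` commutes with the limit `t → ∞`, while for fixed `t` the tower property turns
the normalized conditional expectation at `v` into the one at `u`.
-/

open MeasureTheory Filter Set

section Limits

open scoped Topology ENNReal

variable {α τ : Type*} {m mα : MeasurableSpace α} {μ : Measure α} {l : Filter τ}
  {E : Type*} [NormedAddCommGroup E]

lemma tendsto_eLpNorm_condExp_sub [NormedSpace ℝ E] [CompleteSpace E] {F : τ → α → E} {f : α → E}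
    {p : ℝ≥0∞} (hp : 1 ≤ p) (hF : ∀ t, Integrable (F t) μ) (hf : Integrable f μ)
    (hlim : Tendsto (fun t => eLpNorm (F t - f) p μ) l (𝓝 0)) :
    Tendsto (fun t => eLpNorm (μ[F t | m] - μ[f | m]) p μ) l (𝓝 0) := by
  refine tendsto_of_tendsto_of_tendsto_of_le_of_le tendsto_const_nhds hlim (fun _ => zero_le) ?_
  intro t
  calc eLpNorm (μ[F t | m] - μ[f | m]) p μ = eLpNorm (μ[F t - f | m]) p μ :=
        eLpNorm_congr_ae (condExp_sub (hF t) hf m).symm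
    _ ≤ eLpNorm (F t - f) p μ := eLpNorm_condExp_le_eLpNorm _ hp

variable [l.IsCountablyGenerated]

lemma ae_le_of_ae_tendsto {β : Type*} [TopologicalSpace β] [Preorder β] [ClosedIciTopology β]
    [l.NeBot] {F : τ → α → β} {f g : α → β} (hF : ∀ᶠ t in l, g ≤ᵐ[μ] F t)
    (hlim : ∀ᵐ x ∂μ, Tendsto (fun t => F t x) l (𝓝 (f x))) : g ≤ᵐ[μ] f := by
  obtain ⟨ns, hns⟩ := l.exists_seq_tendsto
  obtain ⟨N, hN⟩ := eventually_atTop.1 (hns.eventually hF)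
  have hF_all : ∀ᵐ x ∂μ, ∀ n ≥ N, g x ≤ F (ns n) x :=
    (ae_ball_iff (Set.to_countable _)).2 hN
  filter_upwards [hlim, hF_all] with x hx hgx
  exact ge_of_tendsto (hx.comp hns) (eventually_atTop.2 ⟨N, hgx⟩)

lemma tendsto_integral_posPart_sub_of_ae_tendsto {F : τ → α → ℝ} {f : α → ℝ}
    (hFm : ∀ᶠ t in l, AEStronglyMeasurable (F t) μ) (hF0 : ∀ᶠ t in l, 0 ≤ᵐ[μ] F t)
    (hf : Integrable f μ) (hlim : ∀ᵐ x ∂μ, Tendsto (fun t => F t x) l (𝓝 (f x))) :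
    Tendsto (fun t => ∫ x, (f x - F t x)⁺ ∂μ) l (𝓝 0) := by
  rw [← integral_zero α ℝ (μ := μ)]
  refine tendsto_integral_filter_of_dominated_convergence (fun x => ‖f x‖) ?_ ?_ hf.norm ?_
  · filter_upwards [hFm] with t ht
    exact continuous_posPart.comp_aestronglyMeasurable (hf.aestronglyMeasurable.sub ht)
  · filter_upwards [hF0] with t ht
    filter_upwards [ht] with x hx
    rw [Real.norm_of_nonneg (posPart_nonneg _)]
    calc (f x - F t x)⁺ ≤ (f x)⁺ := posPart_mono (sub_le_self _ hx)
      _ ≤ ‖f x‖ := sup_le (le_abs_self _) (abs_nonneg _)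
  · filter_upwards [hlim] with x hx
    simpa [Function.comp_def] using (continuous_posPart.tendsto _).comp (hx.const_sub (f x))

/-- Scheffé's lemma. -/
lemma tendsto_eLpNorm_one_sub_of_ae_tendsto_of_tendsto_integral {F : τ → α → ℝ} {f : α → ℝ}
    (hF : ∀ᶠ t in l, Integrable (F t) μ) (hF0 : ∀ᶠ t in l, 0 ≤ᵐ[μ] F t) (hf : Integrable f μ)
    (hlim : ∀ᵐ x ∂μ, Tendsto (fun t => F t x) l (𝓝 (f x)))
    (hint : Tendsto (fun t => ∫ x, F t x ∂μ) l (𝓝 (∫ x, f x ∂μ))) :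
    Tendsto (fun t => eLpNorm (F t - f) 1 μ) l (𝓝 0) := by
  have hpos := tendsto_integral_posPart_sub_of_ae_tendsto
    (hF.mono fun _ h => h.aestronglyMeasurable) hF0 hf hlim
  have hsum : Tendsto (fun t => (∫ x, F t x ∂μ) - ∫ x, f x ∂μ + 2 * ∫ x, (f x - F t x)⁺ ∂μ)
      l (𝓝 0) := by
    simpa using (hint.sub_const (∫ x, f x ∂μ)).add (hpos.const_mul 2)
  rw [← ENNReal.ofReal_zero]
  refine (ENNReal.tendsto_ofReal hsum).congr' ?_
  filter_upwards [hF] with t ht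
  have habs (x : α) : ‖(F t - f) x‖ = F t x - f x + 2 * (f x - F t x)⁺ := by
    have := add_abs_eq_two_nsmul_posPart (f x - F t x)
    rw [Pi.sub_apply, Real.norm_eq_abs, abs_sub_comm]
    linarith [two_nsmul (f x - F t x)⁺]
  rw [eLpNorm_one_eq_lintegral_enorm, ← ofReal_integral_norm_eq_lintegral_enorm (ht.sub hf)]
  simp_rw [habs]
  have hpos_int : Integrable (fun x => (f x - F t x)⁺) μ := (hf.sub ht).pos_part
  rw [integral_add (f := fun x => F t x - f x) (ht.sub hf) (hpos_int.const_mul 2),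
    integral_sub ht hf, integral_const_mul]

lemma ae_eq_of_tendsto_eLpNorm_of_ae_tendsto [l.NeBot] {F : τ → α → E} {f g : α → E} {p : ℝ≥0∞}
    (hp : p ≠ 0) (hF : ∀ t, AEStronglyMeasurable (F t) μ) (hf : AEStronglyMeasurable f μ)
    (hFf : Tendsto (fun t => eLpNorm (F t - f) p μ) l (𝓝 0))
    (hFg : ∀ᵐ x ∂μ, Tendsto (fun t => F t x) l (𝓝 (g x))) : f =ᵐ[μ] g := by
  obtain ⟨ns, hns, hseq⟩ :=
    (tendstoInMeasure_of_tendsto_eLpNorm hp hF hf hFf).exists_seq_tendsto_ae'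
  filter_upwards [hseq, hFg] with x hxf hxg
  exact tendsto_nhds_unique hxf (hxg.comp hns)

lemma condExp_ae_eq_of_tendsto [NormedSpace ℝ E] [CompleteSpace E] [l.NeBot]
    {F G : τ → α → E} {f g : α → E} {p : ℝ≥0∞} (hp : 1 ≤ p)
    (hF : ∀ t, Integrable (F t) μ) (hf : Integrable f μ) (hFG : ∀ t, μ[F t | m] =ᵐ[μ] G t)
    (hFf : Tendsto (fun t => eLpNorm (F t - f) p μ) l (𝓝 0))
    (hGg : ∀ᵐ x ∂μ, Tendsto (fun t => G t x) l (𝓝 (g x))) : μ[f | m] =ᵐ[μ] g := by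
  refine ae_eq_of_tendsto_eLpNorm_of_ae_tendsto (one_pos.trans_le hp).ne'
    (fun t => integrable_condExp.aestronglyMeasurable.congr (hFG t))
    integrable_condExp.aestronglyMeasurable ?_ hGg
  refine (tendsto_eLpNorm_condExp_sub (m := m) hp hF hf hFf).congr fun t => ?_
  exact eLpNorm_congr_ae ((hFG t).sub .rfl)

end Limits

/-- The conditional expectation of a weight `W` divided by its mean: when `W` is nonnegative
and integrable with `E[W] > 0`, this is the density with respect to `P`, on the σ-algebra `m`, of
the penalized measure `W • P / E[W]`. It is the zero function when `E[W] = 0`. -/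
noncomputable def normalizedCondExp {Ω : Type*} {_ : MeasurableSpace Ω} (P : Measure Ω)
    (m : MeasurableSpace Ω) (W : Ω → ℝ) : Ω → ℝ :=
  fun ω => (P[W | m]) ω / ∫ ω', W ω' ∂P

namespace normalizedCondExp

open scoped Topology

variable {Ω : Type*} {m m₁ m₂ mΩ : MeasurableSpace Ω} {P : Measure Ω} {W : Ω → ℝ}

lemma integrable : Integrable (normalizedCondExp P m W) P :=
  integrable_condExp.div_const _

lemma nonneg (hW : 0 ≤ᵐ[P] W) : 0 ≤ᵐ[P] normalizedCondExp P m W := by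
  filter_upwards [condExp_nonneg (m := m) hW] with ω hω
  exact div_nonneg hω (integral_nonneg_of_ae hW)

lemma integral_eq_one (hm : m ≤ mΩ) [SigmaFinite (P.trim hm)] (hW : ∫ ω, W ω ∂P ≠ 0) :
    ∫ ω, normalizedCondExp P m W ω ∂P = 1 := by
  simp only [normalizedCondExp]
  rw [integral_div, integral_condExp hm, div_self hW]

lemma condExp_ae_eq (hm₁₂ : m₁ ≤ m₂) (hm₂ : m₂ ≤ mΩ) [SigmaFinite (P.trim hm₂)] :
    P[normalizedCondExp P m₂ W | m₁] =ᵐ[P] normalizedCondExp P m₁ W := by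
  have hsmul (m' : MeasurableSpace Ω) :
      normalizedCondExp P m' W = (∫ ω, W ω ∂P)⁻¹ • P[W | m'] := by
    ext ω
    exact div_eq_inv_mul _ _
  rw [hsmul, hsmul]
  exact (condExp_smul _ _ _).trans ((condExp_condExp_of_le hm₁₂ hm₂).const_smul _)

variable {τ : Type*} {l : Filter τ} [l.IsCountablyGenerated] {V : τ → Ω → ℝ} {X Y : Ω → ℝ}

lemma tendsto_eLpNorm_one_sub (hm : m ≤ mΩ) [SigmaFinite (P.trim hm)]
    (hV0 : ∀ᶠ t in l, 0 ≤ᵐ[P] V t) (hVint : ∀ᶠ t in l, ∫ ω, V t ω ∂P ≠ 0)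
    (hY : ∫ ω, Y ω ∂P = 1)
    (hlim : ∀ᵐ ω ∂P, Tendsto (fun t => normalizedCondExp P m (V t) ω) l (𝓝 (Y ω))) :
    Tendsto (fun t => eLpNorm (normalizedCondExp P m (V t) - Y) 1 P) l (𝓝 0) := by
  refine tendsto_eLpNorm_one_sub_of_ae_tendsto_of_tendsto_integral (.of_forall fun _ => integrable)
    (hV0.mono fun _ => nonneg) (integrable_of_integral_eq_one hY) hlim ?_
  rw [hY]
  exact tendsto_const_nhds.congr' (hVint.mono fun t ht => (integral_eq_one hm ht).symm)

lemma condExp_limit_ae_eq [l.NeBot] (hm₁₂ : m₁ ≤ m₂) (hm₂ : m₂ ≤ mΩ)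
    [SigmaFinite (P.trim hm₂)] (hV0 : ∀ᶠ t in l, 0 ≤ᵐ[P] V t)
    (hVint : ∀ᶠ t in l, ∫ ω, V t ω ∂P ≠ 0)
    (hX : ∀ᵐ ω ∂P, Tendsto (fun t => normalizedCondExp P m₁ (V t) ω) l (𝓝 (X ω)))
    (hY : ∀ᵐ ω ∂P, Tendsto (fun t => normalizedCondExp P m₂ (V t) ω) l (𝓝 (Y ω)))
    (hY1 : ∫ ω, Y ω ∂P = 1) : P[Y | m₁] =ᵐ[P] X :=
  condExp_ae_eq_of_tendsto le_rfl (fun _ => integrable) (integrable_of_integral_eq_one hY1)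
    (fun _ => condExp_ae_eq hm₁₂ hm₂) (tendsto_eLpNorm_one_sub hm₂ hV0 hVint hY1 hY) hX

end normalizedCondExp

theorem stmt5_general {Ω ι τ : Type*} {mΩ : MeasurableSpace Ω} [Preorder ι]
    (P : Measure Ω) (𝒞 : Filtration ι mΩ) [SigmaFiniteFiltration P 𝒞]
    {l : Filter τ} [l.NeBot] [l.IsCountablyGenerated] (W : τ → Ω → ℝ)
    (hWnn : ∀ᶠ t in l, 0 ≤ᵐ[P] W t) (hWpos : ∀ᶠ t in l, 0 < ∫ ω, W t ω ∂P)
    (M : ι → Ω → ℝ)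
    (hconv : ∀ u, ∀ᵐ ω ∂P,
      Tendsto (fun t => (P[W t | 𝒞 u]) ω / ∫ ω', W t ω' ∂P) l (nhds (M u ω)))
    (hE : IsCofinal {u | ∫ ω, M u ω ∂P = 1}) :
    (∀ u, 0 ≤ᵐ[P] M u) ∧ ∀ u v, u ≤ v → P[M v | 𝒞 u] =ᵐ[P] M u := by
  have condExp_of_mean_one {u v : ι} (huv : u ≤ v) (hv : ∫ ω, M v ω ∂P = 1) :
      P[M v | 𝒞 u] =ᵐ[P] M u :=
    normalizedCondExp.condExp_limit_ae_eq (𝒞.mono huv) (𝒞.le v) hWnn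
      (hWpos.mono fun _ h => h.ne') (hconv u) (hconv v) hv
  refine ⟨fun u => ae_le_of_ae_tendsto (hWnn.mono fun _ => normalizedCondExp.nonneg) (hconv u),
    fun u v huv => ?_⟩
  obtain ⟨w, hw, hvw⟩ := hE v
  calc P[M v | 𝒞 u] =ᵐ[P] P[P[M w | 𝒞 v] | 𝒞 u] :=
        condExp_congr_ae (condExp_of_mean_one hvw hw).symm
    _ =ᵐ[P] P[M w | 𝒞 u] := condExp_condExp_of_le (𝒞.mono huv) (𝒞.le v)
    _ =ᵐ[P] M u := condExp_of_mean_one (huv.trans hvw) hw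

/-- General penalization theorem, martingale part: if the normalized conditional
expectations of the weight process converge a.s. to `M u` with `E[M u] = 1`, then
`M` is a nonnegative martingale. -/
theorem stmt5 {Ω : Type*} {mΩ : MeasurableSpace Ω}
    (P : Measure Ω) [IsProbabilityMeasure P]
    (𝒞 : MeasureTheory.Filtration ℝ mΩ)
    (W : ℝ → Ω → ℝ)
    (hWmeas : ∀ t, Measurable (W t))
    (hWnn : ∀ t ω, 0 ≤ W t ω)
    (hWint : ∀ t > (0 : ℝ), Integrable (W t) P)
    (hWpos : ∀ t > (0 : ℝ), 0 < ∫ ω, W t ω ∂P)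
    (M : ℝ → Ω → ℝ)
    (hMint : ∀ u, 0 ≤ u → Integrable (M u) P)
    (hMmeas : ∀ u, 0 ≤ u → StronglyMeasurable[𝒞 u] (M u))
    (hconv : ∀ u, 0 ≤ u → ∀ᵐ ω ∂P,
      Tendsto (fun t : ℝ => (P[W t|𝒞 u]) ω / ∫ ω', W t ω' ∂P) atTop (nhds (M u ω)))
    (hE : ∀ u, 0 ≤ u → ∫ ω, M u ω ∂P = 1) :
    (∀ u, 0 ≤ u → 0 ≤ᵐ[P] M u) ∧
      (∀ u v, 0 ≤ u → u ≤ v → P[M v|𝒞 u] =ᵐ[P] M u) := by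
  let 𝒢 : Filtration (Ici (0 : ℝ)) mΩ := ⟨fun u => 𝒞 u, fun _ _ h => 𝒞.mono h, fun u => 𝒞.le u⟩
  obtain ⟨hnn, hmart⟩ := stmt5_general P 𝒢 W (.of_forall fun t => .of_forall (hWnn t))
    ((eventually_gt_atTop 0).mono hWpos) (fun u => M u) (fun u => hconv u u.2)
    (fun u => ⟨u, hE u u.2, le_rfl⟩)
  exact ⟨fun u hu => hnn ⟨u, hu⟩, fun u v hu huv => hmart ⟨u, hu⟩ ⟨v, hu.trans huv⟩ huv⟩
end

section
/- Let 0 < α < 1 and define functions C_n : [0,∞) → ℝ recursively by C₀(x) := x^{2α}/(2α) and C_{n+1}(x) := ∫_0^x y^{2α−1} ( ∫_0^y 2 z^{1−2α} C_n(z) dz ) dy. Then for every n ≥ 0 and x ≥ 0, C_n(x) = Γ(α) · x^{2α+2n} / ( 2^{n+1} · Γ(n+1) · Γ(n+1+α) ). -/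
open MeasureTheory Filter Set

/-!
The recursion sends a multiple of `x ^ β` to a multiple of `x ^ (β + 2)`: the two weights cancel,
and the two integrations divide by `(β + 2 - 2 * α) / 2` and by `β + 2`. At `β = 2 * α + 2 * n`
the total divisor is `2 * (n + 1) * (n + 1 + α)`, which is exactly what the functional equation of
`Γ` at `n + 1` and at `n + 1 + α` contributes to the denominator of the closed formula.
-/

lemma setIntegral_Ioc_rpow_mul_of_eqOn {g : ℝ → ℝ} {a b c x : ℝ} (hab : -1 < a + b)
    (hg : EqOn g (fun y ↦ c * y ^ b) (Ioi 0)) (hx : 0 ≤ x) :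
    ∫ y in Ioc 0 x, y ^ a * g y = c / (a + b + 1) * x ^ (a + b + 1) := by
  have hmonomial : EqOn (fun y ↦ y ^ a * g y) (fun y ↦ c * y ^ (a + b)) (Ioc 0 x) := by
    intro y hy
    simp only [hg hy.1, Real.rpow_add hy.1]
    ring
  rw [setIntegral_congr_fun measurableSet_Ioc hmonomial, integral_const_mul,
    ← intervalIntegral.integral_of_le hx, integral_rpow (Or.inl hab),
    Real.zero_rpow (by linarith)]
  ring

/-- The Volterra operator `f ↦ ∫₀ˣ (∫₀ʸ f dm) dS` of the Bessel process of dimension `2 - 2 * α`,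
a right inverse of its generator, with the densities `y ^ (2 * α - 1)` of the scale `S` and
`2 * z ^ (1 - 2 * α)` of the speed measure `m` written out. -/
noncomputable def besselVolterra (α : ℝ) (f : ℝ → ℝ) (x : ℝ) : ℝ :=
  ∫ y in Ioc 0 x, y ^ (2 * α - 1) * ∫ z in Ioc 0 y, 2 * z ^ (1 - 2 * α) * f z

lemma besselVolterra_of_eqOn_rpow {α β c x : ℝ} {f : ℝ → ℝ} (hβα : 0 < β + 2 - 2 * α)
    (hβ : 0 < β + 2) (hf : EqOn f (fun z ↦ c * z ^ β) (Ioi 0)) (hx : 0 ≤ x) :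
    besselVolterra α f x = 2 * c / ((β + 2 - 2 * α) * (β + 2)) * x ^ (β + 2) := by
  have hinner : EqOn (fun y ↦ ∫ z in Ioc 0 y, 2 * z ^ (1 - 2 * α) * f z)
      (fun y ↦ 2 * c / (β + 2 - 2 * α) * y ^ (β + 2 - 2 * α)) (Ioi 0) := by
    intro y hy
    simp only [mul_assoc, integral_const_mul]
    rw [setIntegral_Ioc_rpow_mul_of_eqOn (by linarith) hf (le_of_lt hy),
      show 1 - 2 * α + β + 1 = β + 2 - 2 * α by ring]
    ring
  rw [besselVolterra, setIntegral_Ioc_rpow_mul_of_eqOn (by linarith) hinner hx,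
    show 2 * α - 1 + (β + 2 - 2 * α) + 1 = β + 2 by ring, div_div]

/-- The coefficient of `x ^ (2 * α + 2 * n)` in the `n`-th iterated kernel `Cₙ`. -/
noncomputable def besselCoeff (α : ℝ) (n : ℕ) : ℝ :=
  Real.Gamma α / (2 ^ (n + 1) * Real.Gamma (n + 1) * Real.Gamma (n + 1 + α))

lemma besselCoeff_zero {α : ℝ} (hα : ∀ m : ℕ, α ≠ -m) : besselCoeff α 0 = 1 / (2 * α) := by
  have hα0 : α ≠ 0 := by simpa using hα 0
  have hΓ : Real.Gamma α ≠ 0 := Real.Gamma_ne_zero hα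
  simp only [besselCoeff, Nat.cast_zero, zero_add, pow_one, Real.Gamma_one, mul_one,
    add_comm 1 α, Real.Gamma_add_one hα0]
  field_simp

lemma besselCoeff_succ {α : ℝ} {n : ℕ} (hα : (n : ℝ) + 1 + α ≠ 0) :
    besselCoeff α (n + 1) = besselCoeff α n / (2 * (n + 1) * (n + 1 + α)) := by
  have hn : (n : ℝ) + 1 ≠ 0 := n.cast_add_one_ne_zero
  rw [besselCoeff, besselCoeff, Nat.cast_succ, add_right_comm _ 1 α, Real.Gamma_add_one hn,
    Real.Gamma_add_one hα, div_div]
  congr 1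
  ring

lemma besselVolterra_of_eqOn_besselCoeff {α x : ℝ} {n : ℕ} {f : ℝ → ℝ} (hα : -1 < α)
    (hf : EqOn f (fun z ↦ besselCoeff α n * z ^ (2 * α + 2 * n)) (Ioi 0)) (hx : 0 ≤ x) :
    besselVolterra α f x = besselCoeff α (n + 1) * x ^ (2 * α + 2 * ↑(n + 1)) := by
  have hn : 0 < (n : ℝ) + 1 := n.cast_add_one_pos
  have hnα : 0 < (n : ℝ) + 1 + α := by linarith [n.cast_nonneg (α := ℝ)]
  rw [besselVolterra_of_eqOn_rpow (by linarith [hn]) (by linarith [hnα]) hf hx,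
    besselCoeff_succ hnα.ne',
    show 2 * α + 2 * ↑n + 2 = 2 * (n + 1 + α) by ring, Nat.cast_succ,
    show 2 * α + 2 * ((n : ℝ) + 1) = 2 * (n + 1 + α) by ring,
    show 2 * (n + 1 + α) - 2 * α = 2 * ((n : ℝ) + 1) by ring]
  field_simp

-- If `α < 0`, the value `C 0 0` is governed by Lean's convention `0 ^ (2 * α) = 0`; the integrals
-- do not see it.
theorem stmt12_general (α : ℝ) (hα : -1 < α) (hα0 : α ≠ 0)
    (C : ℕ → ℝ → ℝ)
    (hC0 : ∀ x : ℝ, 0 ≤ x → C 0 x = x ^ (2 * α) / (2 * α))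
    (hCrec : ∀ n : ℕ, ∀ x : ℝ, 0 ≤ x →
      C (n + 1) x =
        ∫ y in Ioc (0 : ℝ) x,
          y ^ (2 * α - 1) * ∫ z in Ioc (0 : ℝ) y, 2 * z ^ (1 - 2 * α) * C n z) :
    ∀ n : ℕ, ∀ x : ℝ, 0 ≤ x →
      C n x = Real.Gamma α * x ^ (2 * α + 2 * n) /
        (2 ^ (n + 1) * Real.Gamma ((n : ℝ) + 1) * Real.Gamma ((n : ℝ) + 1 + α)) := by
  have hpole : ∀ m : ℕ, α ≠ -m := by
    rintro (_ | m) rfl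
    · simp at hα0
    · push_cast at hα
      linarith [m.cast_nonneg (α := ℝ)]
  suffices hcoeff : ∀ n : ℕ, ∀ x : ℝ, 0 ≤ x → C n x = besselCoeff α n * x ^ (2 * α + 2 * n) by
    intro n x hx
    rw [hcoeff n x hx, besselCoeff, div_mul_eq_mul_div]
  intro n
  induction n with
  | zero =>
    intro x hx
    rw [hC0 x hx, besselCoeff_zero hpole, Nat.cast_zero, mul_zero, add_zero, one_div_mul_eq_div]
  | succ n ih =>
    intro x hx
    rw [hCrec n x hx]
    exact besselVolterra_of_eqOn_besselCoeff hα (fun z hz ↦ ih z (le_of_lt hz)) hx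

/-- Explicit formula for the iterated kernels `Cₙ` of the Bessel process of
dimension `δ = 2 - 2α` killed at `0`. -/
theorem stmt12 (α : ℝ) (hα0 : 0 < α) (hα1 : α < 1)
    (C : ℕ → ℝ → ℝ)
    (hC0 : ∀ x : ℝ, 0 ≤ x → C 0 x = x ^ (2 * α) / (2 * α))
    (hCrec : ∀ n : ℕ, ∀ x : ℝ, 0 ≤ x →
      C (n + 1) x =
        ∫ y in Ioc (0 : ℝ) x,
          y ^ (2 * α - 1) * ∫ z in Ioc (0 : ℝ) y, 2 * z ^ (1 - 2 * α) * C n z) :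
    ∀ n : ℕ, ∀ x : ℝ, 0 ≤ x →
      C n x = Real.Gamma α * x ^ (2 * α + 2 * n) /
        (2 ^ (n + 1) * Real.Gamma ((n : ℝ) + 1) * Real.Gamma ((n : ℝ) + 1 + α)) :=
  stmt12_general α (neg_one_lt_zero.trans hα0) hα0.ne' C hC0 hCrec
end

section
/- For all t > 0 and all x, y ∈ ℝ, (1/π) ∫_0^∞ e^{-γ t} cos(x√(2γ)) cos(y√(2γ)) (2γ)^{-1/2} dγ = (1 / (2√(2πt))) · ( e^{-(x−y)²/(2t)} + e^{-(x+y)²/(2t)} ). -/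
/-!
With `u = √(2γ)` the left-hand side becomes `(1/π) ∫₀^∞ e^{-t u²/2} cos (x u) cos (y u) du`, and
`2 cos (x u) cos (y u) = cos ((x - y) u) + cos ((x + y) u)` reduces the claim to the cosine
transform of a Gaussian on the half-line. Since `2 cos (a u) = e^{i a u} + e^{-i a u}`, reflecting
`u ↦ -u` in the second term turns that into half the Fourier transform of the Gaussian.
-/

open MeasureTheory Filter Set Real

section HalfLine

variable {E : Type*} [NormedAddCommGroup E] [NormedSpace ℝ E]

lemma integral_Ioi_add_comp_neg {f : ℝ → E} (hf : Integrable f) :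
    ∫ u in Ioi (0 : ℝ), (f u + f (-u)) = ∫ u, f u := by
  rw [integral_add hf.integrableOn hf.comp_neg.integrableOn, integral_comp_neg_Ioi, neg_zero,
    add_comm, intervalIntegral.integral_Iic_add_Ioi hf.integrableOn hf.integrableOn]

lemma integral_Ioi_inv_sqrt_smul_comp_sqrt (f : ℝ → E) :
    ∫ γ in Ioi (0 : ℝ), (√γ)⁻¹ • f √γ = (2 : ℝ) • ∫ u in Ioi (0 : ℝ), f u := by
  rw [← integral_comp_rpow_Ioi_of_pos (g := f) (one_half_pos (α := ℝ)), ← integral_smul]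
  refine setIntegral_congr_fun measurableSet_Ioi fun γ hγ => ?_
  have hpow : γ ^ (1 / 2 - 1 : ℝ) = (√γ)⁻¹ := by
    rw [sqrt_eq_rpow, ← rpow_neg (le_of_lt hγ)]
    norm_num
  simp only [hpow, ← sqrt_eq_rpow, smul_smul]
  congr 1
  ring

lemma integral_Ioi_inv_sqrt_mul_smul_comp_sqrt_mul (f : ℝ → E) {c : ℝ} (hc : 0 < c) :
    ∫ γ in Ioi (0 : ℝ), (√(c * γ))⁻¹ • f √(c * γ) = (2 / c) • ∫ u in Ioi (0 : ℝ), f u := by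
  rw [integral_comp_mul_left_Ioi (fun γ => (√γ)⁻¹ • f √γ) 0 hc, mul_zero,
    integral_Ioi_inv_sqrt_smul_comp_sqrt, smul_smul, inv_mul_eq_div]

end HalfLine

section Gaussian

variable {b : ℂ}

lemma cexp_neg_mul_sq_mul_cos (b a u : ℂ) :
    Complex.exp (-b * u ^ 2) * Complex.cos (a * u) =
      (Complex.exp (-b * u ^ 2 + Complex.I * a * u) +
        Complex.exp (-b * (-u) ^ 2 + Complex.I * a * (-u))) / 2 := by
  rw [Complex.cos, Complex.exp_add, Complex.exp_add]
  ring_nf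

lemma integrable_cexp_neg_mul_sq_add_I_mul (hb : 0 < b.re) (a : ℂ) :
    Integrable fun u : ℝ => Complex.exp (-b * u ^ 2 + Complex.I * a * u) := by
  simpa only [add_zero] using integrable_cexp_quadratic hb (Complex.I * a) 0

lemma integrable_cexp_neg_mul_sq_mul_cos (hb : 0 < b.re) (a : ℂ) :
    Integrable fun u : ℝ => Complex.exp (-b * u ^ 2) * Complex.cos (a * u) := by
  have h := integrable_cexp_neg_mul_sq_add_I_mul hb a
  simpa only [cexp_neg_mul_sq_mul_cos, Pi.add_apply, Complex.ofReal_neg]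
    using (h.add h.comp_neg).div_const 2

lemma integral_Ioi_cexp_neg_mul_sq_mul_cos (hb : 0 < b.re) (a : ℂ) :
    ∫ u in Ioi (0 : ℝ), Complex.exp (-b * u ^ 2) * Complex.cos (a * u) =
      (π / b) ^ (1 / 2 : ℂ) * Complex.exp (-a ^ 2 / (4 * b)) / 2 := by
  have hfold := integral_Ioi_add_comp_neg (integrable_cexp_neg_mul_sq_add_I_mul hb a)
  simp only [Complex.ofReal_neg] at hfold
  simp only [cexp_neg_mul_sq_mul_cos, integral_div, hfold]
  rw [← fourierIntegral_gaussian hb a]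
  simp only [Complex.exp_add, mul_comm]

lemma integral_Ioi_cexp_neg_mul_sq_mul_cos_mul_cos (hb : 0 < b.re) (x y : ℂ) :
    ∫ u in Ioi (0 : ℝ), Complex.exp (-b * u ^ 2) * Complex.cos (x * u) * Complex.cos (y * u) =
      (π / b) ^ (1 / 2 : ℂ) / 4 *
        (Complex.exp (-(x - y) ^ 2 / (4 * b)) + Complex.exp (-(x + y) ^ 2 / (4 * b))) := by
  have hprod (u : ℝ) :
      Complex.exp (-b * u ^ 2) * Complex.cos (x * u) * Complex.cos (y * u) =
        (Complex.exp (-b * u ^ 2) * Complex.cos ((x - y) * u) +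
          Complex.exp (-b * u ^ 2) * Complex.cos ((x + y) * u)) / 2 := by
    rw [sub_mul, add_mul, Complex.cos_sub, Complex.cos_add]
    ring
  simp only [hprod]
  rw [integral_div, integral_add (integrable_cexp_neg_mul_sq_mul_cos hb _).integrableOn
    (integrable_cexp_neg_mul_sq_mul_cos hb _).integrableOn,
    integral_Ioi_cexp_neg_mul_sq_mul_cos hb, integral_Ioi_cexp_neg_mul_sq_mul_cos hb]
  ring

end Gaussian

lemma ofReal_sqrt_eq_cpow {r : ℝ} (hr : 0 ≤ r) : ((√r : ℝ) : ℂ) = (r : ℂ) ^ (1 / 2 : ℂ) := by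
  rw [sqrt_eq_rpow, Complex.ofReal_cpow hr]
  norm_num

lemma ofReal_div_cpow_half_mul_ofReal_mul_cpow_half {r : ℝ} (hr : 0 < r) {z : ℂ} (hz : z ≠ 0)
    (harg : z.arg ≠ π) :
    ((r : ℂ) / z) ^ (1 / 2 : ℂ) * ((r : ℂ) * z) ^ (1 / 2 : ℂ) = r := by
  have hr' : (r : ℂ) ≠ 0 := Complex.ofReal_ne_zero.2 hr.ne'
  nth_rw 3 [← Complex.exp_log hr']
  rw [Complex.cpow_def_of_ne_zero (div_ne_zero hr' hz),
    Complex.cpow_def_of_ne_zero (mul_ne_zero hr' hz), div_eq_mul_inv,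
    Complex.log_ofReal_mul hr (inv_ne_zero hz), Complex.log_ofReal_mul hr hz,
    Complex.log_inv z harg, ← Complex.exp_add, Complex.ofReal_log hr.le]
  congr 1
  ring

lemma integral_Ioi_cexp_mul_cos_sqrt_mul_cos_sqrt_div_sqrt (t x y : ℂ) :
    ∫ γ in Ioi (0 : ℝ),
        Complex.exp (-γ * t) * Complex.cos (x * √(2 * γ)) *
          Complex.cos (y * √(2 * γ)) / √(2 * γ)
      = ∫ u in Ioi (0 : ℝ),
          Complex.exp (-(t / 2) * u ^ 2) * Complex.cos (x * u) * Complex.cos (y * u) := by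
  have hsub := integral_Ioi_inv_sqrt_mul_smul_comp_sqrt_mul (fun u : ℝ =>
    Complex.exp (-(t / 2) * u ^ 2) * Complex.cos (x * u) * Complex.cos (y * u)) two_pos
  rw [div_self two_ne_zero, one_smul] at hsub
  rw [← hsub]
  refine setIntegral_congr_fun measurableSet_Ioi fun γ hγ => ?_
  have hsq : ((√(2 * γ) : ℝ) : ℂ) ^ 2 = 2 * γ := by
    exact_mod_cast sq_sqrt (mul_pos two_pos hγ).le
  have hexp : -(t / 2) * (2 * γ) = -γ * t := by ring
  simp only [hsq, hexp, Complex.real_smul, Complex.ofReal_inv]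
  rw [div_eq_inv_mul]

theorem stmt13_general (t x y : ℂ) (ht : 0 < t.re) :
    (1 / π) * ∫ γ in Ioi (0 : ℝ),
        Complex.exp (-γ * t) * Complex.cos (x * √(2 * γ)) *
          Complex.cos (y * √(2 * γ)) / √(2 * γ)
      = (1 / (2 * (2 * π * t) ^ (1 / 2 : ℂ))) *
          (Complex.exp (-(x - y) ^ 2 / (2 * t)) + Complex.exp (-(x + y) ^ 2 / (2 * t))) := by
  have ht0 : t ≠ 0 := Complex.ne_zero_of_re_pos ht
  have hb : 0 < (t / 2).re := by simpa using ht
  have hpi : (π : ℂ) ≠ 0 := Complex.ofReal_ne_zero.2 pi_ne_zero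
  have hroot : (π / (t / 2)) ^ (1 / 2 : ℂ) * (2 * π * t) ^ (1 / 2 : ℂ) = 2 * π := by
    rw [show (π : ℂ) / (t / 2) = 2 * π / t by field_simp]
    exact_mod_cast ofReal_div_cpow_half_mul_ofReal_mul_cpow_half two_pi_pos ht0
      (Complex.mem_slitPlane_iff_arg.1 (.inl ht)).1
  have hroot0 : (2 * π * t) ^ (1 / 2 : ℂ) ≠ 0 :=
    right_ne_zero_of_mul (hroot.trans_ne (mul_ne_zero two_ne_zero hpi))
  rw [integral_Ioi_cexp_mul_cos_sqrt_mul_cos_sqrt_div_sqrt,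
    integral_Ioi_cexp_neg_mul_sq_mul_cos_mul_cos hb, show 4 * (t / 2) = 2 * t by ring,
    eq_div_of_mul_eq hroot0 hroot]
  field_simp
  ring

/-- Spectral representation of the transition density of reflecting Brownian
motion on `[0,∞)`. -/
theorem stmt13 (t x y : ℝ) (ht : 0 < t) :
    (1 / π) * ∫ γ in Ioi (0 : ℝ),
        Real.exp (-γ * t) * Real.cos (x * Real.sqrt (2 * γ)) *
          Real.cos (y * Real.sqrt (2 * γ)) / Real.sqrt (2 * γ)
      = (1 / (2 * Real.sqrt (2 * π * t))) *
          (Real.exp (-(x - y) ^ 2 / (2 * t)) + Real.exp (-(x + y) ^ 2 / (2 * t))) := by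
  rw [← Complex.ofReal_inj]
  simpa [← integral_complex_ofReal, ofReal_sqrt_eq_cpow (show 0 ≤ 2 * π * t by positivity)]
    using stmt13_general t x y ht
end

section
/- For all t > 0 and all x ≥ 0, (1/π) ∫_0^∞ e^{-γ t} sin(x√(2γ)) dγ = x · t^{-3/2} · (2π)^{-1/2} · e^{-x²/(2t)}. -/
open MeasureTheory Filter Set Real

/-!
By parity, the substitution `γ = u ^ 2` turns the integral into
`∫ u : ℝ, u * exp (-t * u ^ 2) * sin (c * u)` with `c = x * √2`. Writing the sine through
exponentials leaves first moments of complex Gaussians `exp (b * u ^ 2 + c * u + d)`. Since the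
derivative `(2 * b * u + c) * exp (b * u ^ 2 + c * u + d)` has integral zero, the first moment is
`-c / (2 * b)` times the Gaussian integral.
-/

lemma integrable_mul_cexp_quadratic {b : ℂ} (hb : b.re < 0) (c d : ℂ) :
    Integrable fun x : ℝ => (x : ℂ) * Complex.exp (b * x ^ 2 + c * x + d) := by
  have hdom : Integrable fun x : ℝ => ‖Complex.exp (b * x ^ 2 + (c + 1) * x + d)‖
      + ‖Complex.exp (b * x ^ 2 + (c - 1) * x + d)‖ :=
    (integrable_cexp_quadratic' hb _ d).norm.add (integrable_cexp_quadratic' hb _ d).norm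
  refine hdom.mono' (by fun_prop) (ae_of_all _ fun x => ?_)
  have habs : |x| ≤ Real.exp x + Real.exp (-x) :=
    abs_le.2 ⟨by linarith [Real.add_one_le_exp (-x), Real.exp_pos x],
      by linarith [Real.add_one_le_exp x, Real.exp_pos (-x)]⟩
  have hplus : b * x ^ 2 + (c + 1) * x + d = x + (b * x ^ 2 + c * x + d) := by ring
  have hminus : b * x ^ 2 + (c - 1) * x + d = ((-x : ℝ) : ℂ) + (b * x ^ 2 + c * x + d) := by
    push_cast
    ring
  rw [hplus, hminus, Complex.exp_add (x : ℂ), Complex.exp_add ((-x : ℝ) : ℂ), norm_mul, norm_mul,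
    norm_mul, Complex.norm_exp_ofReal, Complex.norm_exp_ofReal, Complex.norm_real, norm_eq_abs,
    ← add_mul]
  gcongr

lemma hasDerivAt_cexp_quadratic (b c d : ℂ) (x : ℝ) :
    HasDerivAt (fun y : ℝ => Complex.exp (b * y ^ 2 + c * y + d))
      (2 * b * (x * Complex.exp (b * x ^ 2 + c * x + d))
        + c * Complex.exp (b * x ^ 2 + c * x + d)) x := by
  have hquad : HasDerivAt (fun z : ℂ => b * z ^ 2 + c * z + d) (b * (2 * x) + c) x := by
    simpa using (((hasDerivAt_pow 2 (x : ℂ)).const_mul b).add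
      ((hasDerivAt_id (x : ℂ)).const_mul c)).add_const d
  refine hquad.cexp.comp_ofReal.congr_deriv ?_
  ring

lemma integral_mul_cexp_quadratic {b : ℂ} (hb : b.re < 0) (c d : ℂ) :
    ∫ x : ℝ, (x : ℂ) * Complex.exp (b * x ^ 2 + c * x + d)
      = -c / (2 * b) * ((π / -b) ^ (1 / 2 : ℂ) * Complex.exp (d - c ^ 2 / (4 * b))) := by
  have hb0 : b ≠ 0 := by rintro rfl; simp at hb
  have hmoment := (integrable_mul_cexp_quadratic hb c d).const_mul (2 * b)
  have hexp := (integrable_cexp_quadratic' hb c d).const_mul c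
  have hzero := integral_eq_zero_of_hasDerivAt_of_integrable (hasDerivAt_cexp_quadratic b c d)
    (hmoment.add hexp) (integrable_cexp_quadratic' hb c d)
  rw [integral_add hmoment hexp, integral_const_mul, integral_const_mul,
    integral_cexp_quadratic hb] at hzero
  rw [div_mul_eq_mul_div, eq_div_iff (mul_ne_zero two_ne_zero hb0)]
  linear_combination hzero

lemma integral_mul_cexp_neg_mul_sq_mul_sin {b : ℂ} (hb : 0 < b.re) (c : ℂ) :
    ∫ x : ℝ, (x : ℂ) * (Complex.exp (-b * x ^ 2) * Complex.sin (c * x))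
      = c / (2 * b) * ((π / b) ^ (1 / 2 : ℂ) * Complex.exp (-c ^ 2 / (4 * b))) := by
  have hb' : (-b).re < 0 := by simpa using hb
  have hsplit (x : ℝ) : (x : ℂ) * (Complex.exp (-b * x ^ 2) * Complex.sin (c * x))
      = Complex.I / 2 * (x * Complex.exp (-b * x ^ 2 + -(c * Complex.I) * x + 0)
        - x * Complex.exp (-b * x ^ 2 + c * Complex.I * x + 0)) := by
    rw [Complex.sin, add_zero, add_zero, Complex.exp_add, Complex.exp_add]
    ring_nf
  simp only [hsplit]
  rw [integral_const_mul, integral_sub (integrable_mul_cexp_quadratic hb' _ _)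
    (integrable_mul_cexp_quadratic hb' _ _), integral_mul_cexp_quadratic hb',
    integral_mul_cexp_quadratic hb', neg_sq, mul_pow, Complex.I_sq, neg_neg]
  ring_nf
  rw [Complex.I_sq]
  ring

section EvenOdd

variable {E : Type*} [NormedAddCommGroup E] [NormedSpace ℝ E]

lemma integral_eq_two_smul_integral_Ioi_of_even {f : ℝ → E} (hf : f.Even) :
    ∫ x, f x = (2 : ℝ) • ∫ x in Ioi 0, f x := by
  have habs (x : ℝ) : f ‖x‖ = f x := by
    rcases abs_choice x with h | h <;> simp only [norm_eq_abs, h, hf x]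
  have hpolar := integral_fun_norm_addHaar (volume : Measure ℝ) f
  simp only [habs] at hpolar
  simpa [two_smul] using hpolar

lemma integral_Ioi_comp_sqrt_of_odd {g : ℝ → E} (hg : g.Odd) :
    ∫ y in Ioi 0, g √y = ∫ u, u • g u := by
  have heven : Function.Even fun u : ℝ => u • g u := fun u => by
    simp only [hg u, smul_neg, neg_smul, neg_neg]
  rw [integral_eq_two_smul_integral_Ioi_of_even heven, ← integral_smul,
    ← integral_comp_rpow_Ioi_of_pos two_pos]
  refine setIntegral_congr_fun measurableSet_Ioi fun u (hu : 0 < u) => ?_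
  norm_num [sqrt_sq hu.le, mul_smul]

end EvenOdd

lemma integral_Ioi_cexp_neg_mul_mul_sin_mul_sqrt {b : ℂ} (hb : 0 < b.re) (c : ℂ) :
    ∫ y : ℝ in Ioi 0, Complex.exp (-b * y) * Complex.sin (c * √y)
      = c / (2 * b) * ((π / b) ^ (1 / 2 : ℂ) * Complex.exp (-c ^ 2 / (4 * b))) := by
  have hodd : Function.Odd fun u : ℝ => Complex.exp (-b * u ^ 2) * Complex.sin (c * u) :=
    fun u => by simp
  rw [← integral_mul_cexp_neg_mul_sq_mul_sin hb]
  simp only [← Complex.real_smul]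
  rw [← integral_Ioi_comp_sqrt_of_odd hodd]
  refine setIntegral_congr_fun measurableSet_Ioi fun y (hy : 0 < y) => ?_
  simp only [← Complex.ofReal_pow, sq_sqrt hy.le]

lemma ofReal_mul_cpow {r : ℝ} (hr : 0 ≤ r) (z s : ℂ) :
    ((r : ℂ) * z) ^ s = (r : ℂ) ^ s * z ^ s := by
  rcases hr.eq_or_lt with rfl | hr
  · rcases eq_or_ne s 0 with rfl | hs <;> simp [*]
  rcases eq_or_ne z 0 with rfl | hz
  · rcases eq_or_ne s 0 with rfl | hs <;> simp [*]
  have hr0 : (r : ℂ) ≠ 0 := by exact_mod_cast hr.ne'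
  rw [Complex.cpow_def_of_ne_zero (mul_ne_zero hr0 hz), Complex.cpow_def_of_ne_zero hr0,
    Complex.cpow_def_of_ne_zero hz, Complex.log_ofReal_mul hr hz, add_mul, Complex.exp_add,
    Complex.ofReal_log hr.le]

lemma ofReal_div_cpow {r : ℝ} (hr : 0 ≤ r) {z : ℂ} (hz : z.arg ≠ π) (s : ℂ) :
    ((r : ℂ) / z) ^ s = (r : ℂ) ^ s / z ^ s := by
  rw [div_eq_mul_inv, ofReal_mul_cpow hr, Complex.inv_cpow z s hz, div_eq_mul_inv]

lemma sqrt_two_div_mul_pi_div_cpow_half {z : ℂ} (hz : 0 < z.re) :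
    √2 / (2 * π * z) * (π / z) ^ (1 / 2 : ℂ)
      = z ^ (-(3 : ℂ) / 2) * (2 * π : ℂ) ^ (-(1 : ℂ) / 2) := by
  have hz0 : z ≠ 0 := by rintro rfl; simp at hz
  have harg : z.arg ≠ π := (Complex.mem_slitPlane_iff_arg.1 (.inl hz)).1
  have hz32 : z ^ (-(3 : ℂ) / 2) = (z * z ^ (1 / 2 : ℂ))⁻¹ := by
    rw [show -(3 : ℂ) / 2 = -(1 + 1 / 2) by norm_num, Complex.cpow_neg, Complex.cpow_add _ _ hz0,
      Complex.cpow_one]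
  have h2pi : (2 * π : ℂ) ^ (-(1 : ℂ) / 2) = (√2 * (π : ℂ) ^ (1 / 2 : ℂ))⁻¹ := by
    rw [neg_div, Complex.cpow_neg, ← Complex.ofReal_ofNat, ofReal_mul_cpow zero_le_two,
      sqrt_eq_rpow, Complex.ofReal_cpow zero_le_two]
    norm_num
  have hsqrt2 : (√2 : ℂ) ^ 2 = 2 := by exact_mod_cast sq_sqrt zero_le_two
  have hsqrtpi : ((π : ℂ) ^ (1 / 2 : ℂ)) ^ 2 = π := by simp
  have hsqrt2_ne : (√2 : ℂ) ≠ 0 := by simp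
  have hsqrtpi_ne : (π : ℂ) ^ (1 / 2 : ℂ) ≠ 0 := by simp [pi_ne_zero]
  have hsqrtz_ne : z ^ (1 / 2 : ℂ) ≠ 0 := by simp [hz0]
  rw [ofReal_div_cpow pi_pos.le harg, hz32, h2pi]
  field_simp
  rw [hsqrt2, hsqrtpi]

theorem stmt15_general (t x : ℂ) (ht : 0 < t.re) :
    (1 / π) * ∫ γ : ℝ in Ioi 0, Complex.exp (-γ * t) * Complex.sin (x * √(2 * γ))
      = x * t ^ (-(3 : ℂ) / 2) * (2 * π : ℂ) ^ (-(1 : ℂ) / 2) * Complex.exp (-x ^ 2 / (2 * t)) := by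
  have hintegrand (γ : ℝ) : Complex.exp (-γ * t) * Complex.sin (x * √(2 * γ))
      = Complex.exp (-t * γ) * Complex.sin (x * √2 * √γ) := by
    rw [sqrt_mul zero_le_two]
    push_cast
    ring_nf
  have hexponent : -(x * √2) ^ 2 / (4 * t) = -x ^ 2 / (2 * t) := by
    have hsqrt2 : (√2 : ℂ) ^ 2 = 2 := by exact_mod_cast sq_sqrt zero_le_two
    rw [mul_pow, hsqrt2]
    ring
  simp only [hintegrand]
  rw [integral_Ioi_cexp_neg_mul_mul_sin_mul_sqrt ht, hexponent, mul_assoc x,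
    ← sqrt_two_div_mul_pi_div_cpow_half ht]
  ring

/-- Spectral representation of the density of the first hitting time of `0` by a
Brownian motion started at `x ≥ 0`. -/
theorem stmt15 (t x : ℝ) (ht : 0 < t) (hx : 0 ≤ x) :
    (1 / π) * ∫ γ in Ioi (0 : ℝ), Real.exp (-γ * t) * Real.sin (x * Real.sqrt (2 * γ))
      = x * t ^ (-(3 : ℝ) / 2) * (2 * π) ^ (-(1 : ℝ) / 2) * Real.exp (-x ^ 2 / (2 * t)) := by
  apply Complex.ofReal_injective
  simpa [← integral_complex_ofReal, Complex.ofReal_cpow ht.le, Complex.ofReal_cpow two_pi_pos.le]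
    using stmt15_general t x ht
end
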